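/- arXiv:0805.0582 — 2 statements merged into one kernel-verified Lean document; each statement's English description precedes it below -/
import Mathlib

section
/- Assume conditions (i)–(iii) hold and f is convolution invertible with inverse f^{-1}. Let (E ⊗_k Ā^{⊗*}, b) be the Hochschild complex of A with coefficients in E = A #_f H and, for h ∈ H, let ϑ^h be the chain endomorphism ϑ^h(x ⊗ ā_1 ⊗ ⋯ ⊗ ā_r) = γ(h^{(3)}) x γ^{-1}(h^{(1)}) ⊗ class of (a_1 ⊗ ⋯ ⊗ a_r)^{h^{(2)}}. Then for all h, l ∈ H, the endomorphisms of the homology H_*(A, E) of (E ⊗_k Ā^{⊗*}, b) induced by ϑ^h∘ϑ^l and by ϑ^{hl} coincide in every degree; consequently H_*(A, E) is a left H-module. -/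
/-!
In `E` the map `γ` is convolution invertible, it implements the weak action,
`γ(h) a = a^{h⁽¹⁾} γ(h⁽²⁾)`, and `γ(h)γ(l) = f(h⁽¹⁾, l⁽¹⁾) γ(h⁽²⁾l⁽²⁾)`. So `ϑ^h ∘ ϑ^l` and `ϑ^{hl}`
have the same shape: `x ⊗ ā` goes to `V x V⁻¹ ⊗ ā^{h ⊗ l}`, where in the first case `V` is
`γ(h)γ(l)` and `a^{h ⊗ l}` is `(a^l)^h`, and in the second `V` is `γ(hl)` and `a^{h ⊗ l}` is
`a^{hl}`. The twisted module condition says that `f` intertwines these two actions. Inserting `f`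
after the first `j` tensor factors, with `(a^l)^h` before it and `a^{hl}` behind it, and summing
over `j` with alternating signs gives a chain homotopy of prism type. To see this, write a chain as
a word whose first and last letters act on `x`: every face of the Hochschild boundary then
multiplies two adjacent letters, the inner faces of neighbouring words cancel in pairs because `f`
can be moved past a letter, and the two outer faces left over are the two endomorphisms.
-/

open TensorProduct

noncomputable section CrossedProduct

variable (k A H : Type*) [CommRing k] [Ring A] [Algebra k A] [Ring H] [HopfAlgebra k H]

/-- A chosen "Sweedler representation" of the comultiplication of `H`:
`comul h = ∑_{i < n h} c₁ h i ⊗ c₂ h i` for every `h`. -/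
def IsSweedlerRep (n : H → ℕ) (c₁ c₂ : H → ℕ → H) : Prop :=
  ∀ h : H, Coalgebra.comul (R := k) h = ∑ i ∈ Finset.range (n h), c₁ h i ⊗ₜ[k] c₂ h i

/-- `σ` is a weak action of `H` on `A`: `(ab)^h = a^{h⁽¹⁾} b^{h⁽²⁾}`, `1^h = ε(h)1`, `a^1 = a`. -/
def IsWeakAction (n : H → ℕ) (c₁ c₂ : H → ℕ → H) (σ : H →ₗ[k] A →ₗ[k] A) : Prop :=
  (∀ (h : H) (a b : A),
      σ h (a * b) = ∑ i ∈ Finset.range (n h), σ (c₁ h i) a * σ (c₂ h i) b) ∧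
  (∀ h : H, σ h (1 : A) = Coalgebra.counit (R := k) h • (1 : A)) ∧
  (∀ a : A, σ (1 : H) a = a)

/-- Condition (i): normality of the cocycle `f`. -/
def IsNormal (f : H →ₗ[k] H →ₗ[k] A) : Prop :=
  ∀ h : H, f h (1 : H) = Coalgebra.counit (R := k) h • (1 : A) ∧
    f (1 : H) h = Coalgebra.counit (R := k) h • (1 : A)

/-- Condition (ii): the cocycle condition
`f(l⁽¹⁾,m⁽¹⁾)^{h⁽¹⁾} f(h⁽²⁾, l⁽²⁾m⁽²⁾) = f(h⁽¹⁾,l⁽¹⁾) f(h⁽²⁾l⁽²⁾, m)`. -/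
def IsCocycle (n : H → ℕ) (c₁ c₂ : H → ℕ → H) (σ : H →ₗ[k] A →ₗ[k] A)
    (f : H →ₗ[k] H →ₗ[k] A) : Prop :=
  ∀ h l m : H,
    (∑ i ∈ Finset.range (n h), ∑ j ∈ Finset.range (n l), ∑ p ∈ Finset.range (n m),
      σ (c₁ h i) (f (c₁ l j) (c₁ m p)) * f (c₂ h i) (c₂ l j * c₂ m p)) =
    ∑ i ∈ Finset.range (n h), ∑ j ∈ Finset.range (n l),
      f (c₁ h i) (c₁ l j) * f (c₂ h i * c₂ l j) m

/-- Condition (iii): the twisted module condition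
`(a^{l⁽¹⁾})^{h⁽¹⁾} f(h⁽²⁾,l⁽²⁾) = f(h⁽¹⁾,l⁽¹⁾) a^{h⁽²⁾l⁽²⁾}`. -/
def IsTwistedModule (n : H → ℕ) (c₁ c₂ : H → ℕ → H) (σ : H →ₗ[k] A →ₗ[k] A)
    (f : H →ₗ[k] H →ₗ[k] A) : Prop :=
  ∀ (h l : H) (a : A),
    (∑ i ∈ Finset.range (n h), ∑ j ∈ Finset.range (n l),
      σ (c₁ h i) (σ (c₁ l j) a) * f (c₂ h i) (c₂ l j)) =
    ∑ i ∈ Finset.range (n h), ∑ j ∈ Finset.range (n l),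
      f (c₁ h i) (c₁ l j) * σ (c₂ h i * c₂ l j) a

/-- `finv` is the convolution inverse of `f`:
`f(h⁽¹⁾,l⁽¹⁾) f⁻¹(h⁽²⁾,l⁽²⁾) = f⁻¹(h⁽¹⁾,l⁽¹⁾) f(h⁽²⁾,l⁽²⁾) = ε(h)ε(l)1_A`. -/
def IsConvInverse (n : H → ℕ) (c₁ c₂ : H → ℕ → H) (f finv : H →ₗ[k] H →ₗ[k] A) : Prop :=
  ∀ h l : H,
    (∑ i ∈ Finset.range (n h), ∑ j ∈ Finset.range (n l),
        f (c₁ h i) (c₁ l j) * finv (c₂ h i) (c₂ l j) =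
      (Coalgebra.counit (R := k) h * Coalgebra.counit (R := k) l) • (1 : A)) ∧
    (∑ i ∈ Finset.range (n h), ∑ j ∈ Finset.range (n l),
        finv (c₁ h i) (c₁ l j) * f (c₂ h i) (c₂ l j) =
      (Coalgebra.counit (R := k) h * Coalgebra.counit (R := k) l) • (1 : A))

/-- The multiplication of `A #_f H` as a bilinear map on `A ⊗[k] H`:
`(a # h)(b # l) = a b^{h⁽¹⁾} f(h⁽²⁾, l⁽¹⁾) # h⁽³⁾ l⁽²⁾`. -/
def crossedMul (σ : H →ₗ[k] A →ₗ[k] A) (f : H →ₗ[k] H →ₗ[k] A) :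
    (A ⊗[k] H) →ₗ[k] (A ⊗[k] H) →ₗ[k] (A ⊗[k] H) :=
  TensorProduct.lift
    (((LinearMap.llcomp k (A ⊗[k] H) (A ⊗[k] H) (A ⊗[k] H)).comp
        (TensorProduct.curry
          ((LinearMap.rTensor H (LinearMap.mul' k A)) ∘ₗ
            (TensorProduct.assoc k A A H).symm.toLinearMap))).compl₂
      (TensorProduct.curry
        ((LinearMap.rTensor H (LinearMap.mul' k A)) ∘ₗ
         (TensorProduct.map
            (TensorProduct.map (TensorProduct.lift σ) (TensorProduct.lift f))
            (LinearMap.mul' k H)) ∘ₗ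
         (LinearMap.rTensor (H ⊗[k] H)
            (TensorProduct.tensorTensorTensorComm k H H A H).toLinearMap) ∘ₗ
         (TensorProduct.tensorTensorTensorComm k (H ⊗[k] H) H (A ⊗[k] H) H).toLinearMap ∘ₗ
         (TensorProduct.map
            ((LinearMap.rTensor H (Coalgebra.comul (R := k))) ∘ₗ (Coalgebra.comul (R := k)))
            ((TensorProduct.assoc k A H H).symm.toLinearMap ∘ₗ
              (LinearMap.lTensor A (Coalgebra.comul (R := k))))))))

/-- The unit `1 # 1` of the crossed product. -/
def oneE : A ⊗[k] H := (1 : A) ⊗ₜ[k] (1 : H)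

/-- The map `γ : H → A #_f H`, `γ(h) = 1 # h`. -/
def gam : H →ₗ[k] A ⊗[k] H := TensorProduct.mk k A H 1

/-- The map `h ↦ f⁻¹(S(h⁽²⁾), h⁽³⁾) # S(h⁽¹⁾)`, the convolution inverse of `γ`. -/
def gammaInv (finv : H →ₗ[k] H →ₗ[k] A) : H →ₗ[k] A ⊗[k] H :=
  (TensorProduct.comm k H A).toLinearMap ∘ₗ
    (TensorProduct.map (HopfAlgebra.antipode (R := k))
      ((TensorProduct.lift finv) ∘ₗ (LinearMap.rTensor H (HopfAlgebra.antipode (R := k))))) ∘ₗ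
    (LinearMap.lTensor H (Coalgebra.comul (R := k))) ∘ₗ (Coalgebra.comul (R := k))

/-- The canonical coaction `ν = id_A ⊗ Δ : A #_f H → (A #_f H) ⊗ H`. -/
def nuE : (A ⊗[k] H) →ₗ[k] (A ⊗[k] H) ⊗[k] H :=
  (TensorProduct.assoc k A H H).symm.toLinearMap ∘ₗ
    (LinearMap.lTensor A (Coalgebra.comul (R := k)))

/-- Convolution product on `Hom_k(H, A #_f H)`: `(u * v)(h) = u(h⁽¹⁾) v(h⁽²⁾)`. -/
def convMul (σ : H →ₗ[k] A →ₗ[k] A) (f : H →ₗ[k] H →ₗ[k] A)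
    (u v : H →ₗ[k] A ⊗[k] H) : H →ₗ[k] A ⊗[k] H :=
  (TensorProduct.lift (crossedMul k A H σ f)) ∘ₗ (TensorProduct.map u v) ∘ₗ
    (Coalgebra.comul (R := k))

/-- The unit of the convolution algebra `Hom_k(H, A #_f H)`: `h ↦ ε(h) 1_E`. -/
def convOne : H →ₗ[k] A ⊗[k] H :=
  (LinearMap.toSpanSingleton k (A ⊗[k] H) (oneE k A H)) ∘ₗ (Coalgebra.counit (R := k))

/-- Sum over iterated (right-nested) Sweedler components:
`swSum n c₁ c₂ r h F = ∑ F (h⁽¹⁾, …, h⁽ʳ⁺¹⁾)`. -/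
def swSum {M : Type*} [AddCommMonoid M] (n : H → ℕ) (c₁ c₂ : H → ℕ → H) :
    (r : ℕ) → H → ((Fin (r + 1) → H) → M) → M
  | 0, h, F => F (fun _ => h)
  | (r + 1), h, F =>
      ∑ i ∈ Finset.range (n h), swSum n c₁ c₂ r (c₂ h i) (fun g => F (Fin.cons (c₁ h i) g))

/-- The product of a list of elements of the crossed product. -/
def prodE (σ : H →ₗ[k] A →ₗ[k] A) (f : H →ₗ[k] H →ₗ[k] A) :
    List (A ⊗[k] H) → A ⊗[k] H
  | [] => oneE k A H
  | x :: L => crossedMul k A H σ f x (prodE σ f L)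

end CrossedProduct
section Statement13

variable (k A H : Type*) [CommRing k] [Ring A] [Algebra k A] [Ring H] [HopfAlgebra k H]

/-- The modules `E ⊗ Ā^{⊗r}` of the Hochschild complex of `A` with coefficients in
`E = A #_f H`, where `Ā = A / k·1_A`. -/
abbrev HochM (r : ℕ) : Type _ :=
  (A ⊗[k] H) ⊗[k] (⨂[k]^r (A ⧸ (Submodule.span k {(1 : A)})))

end Statement13

section Tuples

lemma contractNth_zero_cons {α : Type*} {n : ℕ} (op : α → α → α) (a b : α) (g : Fin n → α) :
    Fin.contractNth 0 op (Fin.cons a (Fin.cons b g) : Fin (n + 2) → α) = Fin.cons (op a b) g := by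
  ext i
  cases i using Fin.cases <;> simp [Fin.contractNth]

lemma contractNth_succ_cons {α : Type*} {n : ℕ} (op : α → α → α) (j : Fin (n + 1)) (a : α)
    (g : Fin (n + 1) → α) :
    Fin.contractNth j.succ op (Fin.cons a g : Fin (n + 2) → α) =
      Fin.cons a (Fin.contractNth j op g) := by
  ext i
  cases i using Fin.cases <;> simp [Fin.contractNth]

lemma map₂_cons_cons {α β γ : Type*} {n : ℕ} (op : α → β → γ) (a : α) (b : β)
    (g : Fin n → α) (g' : Fin n → β) :
    (fun i => op ((Fin.cons a g : Fin (n + 1) → α) i) ((Fin.cons b g' : Fin (n + 1) → β) i)) =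
      Fin.cons (op a b) fun i => op (g i) (g' i) := by
  ext i
  cases i using Fin.cases <;> rfl

end Tuples

section SweedlerSums

variable {k C ι M N : Type*} [CommSemiring k] [AddCommMonoid C] [Module k C] [Coalgebra k C]
  [AddCommMonoid M] [AddCommMonoid N]

/-- `sweedlerSum ρ n c F = ∑ F (c⁽¹⁾, …, c⁽ⁿ⁺¹⁾)`, where the iterated comultiplication of `c` is
expanded from the right by means of the chosen representations `ρ`. -/
def sweedlerSum (ρ : ∀ c : C, Coalgebra.Repr k c ι) :
    (n : ℕ) → C → ((Fin (n + 1) → C) → M) → M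
  | 0, c, F => F fun _ => c
  | n + 1, c, F =>
      ∑ i ∈ (ρ c).index, sweedlerSum ρ n ((ρ c).right i) fun g => F (Fin.cons ((ρ c).left i) g)

variable (ρ : ∀ c : C, Coalgebra.Repr k c ι)

lemma sweedlerSum_succ (n : ℕ) (c : C) (F : (Fin (n + 2) → C) → M) :
    sweedlerSum ρ (n + 1) c F = ∑ i ∈ (ρ c).index,
      sweedlerSum ρ n ((ρ c).right i) fun g => F (Fin.cons ((ρ c).left i) g) := rfl

lemma map_sweedlerSum {Φ : Type*} [FunLike Φ M N] [AddMonoidHomClass Φ M N] (φ : Φ) (n : ℕ)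
    (c : C) (F : (Fin (n + 1) → C) → M) :
    φ (sweedlerSum ρ n c F) = sweedlerSum ρ n c fun g => φ (F g) := by
  induction n generalizing c with
  | zero => rfl
  | succ n ih => simp only [sweedlerSum, map_sum, ih]

lemma sweedlerSum_sum {J : Type*} (s : Finset J) (n : ℕ) (c : C)
    (F : J → (Fin (n + 1) → C) → M) :
    (sweedlerSum ρ n c fun g => ∑ j ∈ s, F j g) = ∑ j ∈ s, sweedlerSum ρ n c (F j) := by
  induction n generalizing c with
  | zero => rfl
  | succ n ih => simpa only [sweedlerSum, ih] using Finset.sum_comm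

variable [Module k M]

/-- The representation-free form of `sweedlerSum`, for multilinear summands: the value of a
multilinear map on the iterated comultiplication. -/
noncomputable def sweedlerMap : (n : ℕ) →
    MultilinearMap k (fun _ : Fin (n + 1) => C) M →ₗ[k] C →ₗ[k] M
  | 0 => (MultilinearMap.ofSubsingletonₗ k k C M (0 : Fin 1)).symm.toLinearMap
  | n + 1 => LinearMap.lcomp k M Coalgebra.comul ∘ₗ TensorProduct.uncurry (.id k) C C M ∘ₗ
      LinearMap.llcomp k C _ _ (sweedlerMap n) ∘ₗ
        (multilinearCurryLeftEquiv k (fun _ : Fin (n + 2) => C) M).toLinearMap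

lemma sweedlerMap_succ_apply (n : ℕ) (K : MultilinearMap k (fun _ : Fin (n + 2) => C) M) (c : C) :
    sweedlerMap (n + 1) K c =
      TensorProduct.lift (sweedlerMap n ∘ₗ K.curryLeft) (Coalgebra.comul (R := k) c) := rfl

lemma sweedlerSum_eq_sweedlerMap (n : ℕ) (c : C)
    (K : MultilinearMap k (fun _ : Fin (n + 1) => C) M) :
    sweedlerSum ρ n c K = sweedlerMap n K c := by
  induction n generalizing c with
  | zero => rfl
  | succ n ih =>
    rw [sweedlerMap_succ_apply, ← (ρ c).eq, map_sum]
    exact Finset.sum_congr rfl fun i _ => ih _ (K.curryLeft ((ρ c).left i))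

lemma sweedlerSum_tmul {D κ : Type*} [AddCommMonoid D] [Module k D] [Coalgebra k D]
    (ρ' : ∀ d : D, Coalgebra.Repr k d κ) (n : ℕ) (c : C) (d : D)
    (K : MultilinearMap k (fun _ : Fin (n + 1) => C ⊗[k] D) M) :
    (sweedlerSum ρ' n d fun g' => sweedlerSum ρ n c fun g => K fun i => g i ⊗ₜ g' i) =
      sweedlerMap n K (c ⊗ₜ d) := by
  induction n generalizing c d with
  | zero => rfl
  | succ n ih =>
    have hcons := map₂_cons_cons (n := n + 1) fun (c : C) (d : D) => c ⊗ₜ[k] d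
    simp only [sweedlerSum, sweedlerSum_sum, hcons, ← MultilinearMap.curryLeft_apply, ih]
    rw [sweedlerMap_succ_apply, TensorProduct.comul_tmul, ← (ρ c).eq, ← (ρ' d).eq]
    simp only [TensorProduct.sum_tmul, TensorProduct.tmul_sum, map_sum,
      TensorProduct.AlgebraTensorModule.tensorTensorTensorComm_tmul]
    rfl

lemma sweedlerMap_compLinearMap_coalgHom {D : Type*} [AddCommMonoid D] [Module k D]
    [Coalgebra k D] (ψ : C →ₗc[k] D) (n : ℕ)
    (K : MultilinearMap k (fun _ : Fin (n + 1) => D) M) (c : C) :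
    sweedlerMap n (K.compLinearMap fun _ => (ψ : C →ₗ[k] D)) c = sweedlerMap n K (ψ c) := by
  induction n generalizing c with
  | zero => rfl
  | succ n ih =>
    rw [sweedlerMap_succ_apply, sweedlerMap_succ_apply, ← CoalgHomClass.map_comp_comul_apply ψ c]
    induction Coalgebra.comul (R := k) c using TensorProduct.induction_on with
    | zero => simp
    | add s t hs ht => simp only [map_add, hs, ht]
    | tmul a b =>
      have hcurry : (K.compLinearMap fun _ => (ψ : C →ₗ[k] D)).curryLeft a =
          (K.curryLeft (ψ a)).compLinearMap fun _ => (ψ : C →ₗ[k] D) := by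
        ext g
        refine congrArg K (funext fun i => ?_)
        cases i using Fin.cases <;> rfl
      simpa [hcurry] using ih (K.curryLeft (ψ a)) b

lemma sum_counit_smul_left {c : C} (r : Coalgebra.Repr k c ι) :
    ∑ i ∈ r.index, Coalgebra.counit (R := k) (r.right i) • r.left i = c := by
  simpa only [map_sum, TensorProduct.lift.tmul, LinearMap.flip_apply, LinearMap.lsmul_apply,
    one_smul] using congr(TensorProduct.lift (LinearMap.lsmul k C).flip
      $(Coalgebra.sum_tmul_counit_eq r))

lemma sum_sum_coassoc {c : C} {I J : Type*} (r : Coalgebra.Repr k c ι)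
    (r₁ : ∀ i, Coalgebra.Repr k (r.left i) I) (r₂ : ∀ i, Coalgebra.Repr k (r.right i) J)
    (Φ : C ⊗[k] (C ⊗[k] C) →ₗ[k] M) :
    ∑ i ∈ r.index, ∑ j ∈ (r₂ i).index, Φ (r.left i ⊗ₜ ((r₂ i).left j ⊗ₜ (r₂ i).right j)) =
      ∑ i ∈ r.index, ∑ j ∈ (r₁ i).index, Φ ((r₁ i).left j ⊗ₜ ((r₁ i).right j ⊗ₜ r.right i)) := by
  simpa only [map_sum] using congr(Φ $((Coalgebra.sum_tmul_tmul_eq r r₁ r₂).symm))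

variable {E : Type*} [Semiring E] [Algebra k E]

lemma sum_conv_mul_left {c : C} {J : Type*} (r : Coalgebra.Repr k c ι)
    (r' : ∀ i, Coalgebra.Repr k (r.right i) J) (L : E →ₗ[k] C →ₗ[k] M)
    (u v : WithConv (C →ₗ[k] E)) :
    ∑ i ∈ r.index, ∑ j ∈ (r' i).index, L (u (r.left i) * v ((r' i).left j)) ((r' i).right j) =
      ∑ i ∈ r.index, L ((u * v) (r.left i)) (r.right i) := by
  let r₁ (i : ι) := Coalgebra.Repr.arbitrary k (r.left i)
  have hmul (i : ι) := (r₁ i).convMul_apply u v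
  simp only [hmul, map_sum, LinearMap.sum_apply]
  exact sum_sum_coassoc r r₁ r' (TensorProduct.lift L ∘ₗ
    LinearMap.rTensor C (LinearMap.mul' k E ∘ₗ TensorProduct.map u.ofConv v.ofConv) ∘ₗ
      (TensorProduct.assoc k C C C).symm.toLinearMap)

lemma sweedlerSum_contractNth (n : ℕ) (c : C) (j : Fin (n + 1))
    (w : Fin (n + 2) → WithConv (C →ₗ[k] E)) (K : MultilinearMap k (fun _ : Fin (n + 1) => E) M) :
    (sweedlerSum ρ (n + 1) c fun g => K (Fin.contractNth j.castSucc (· * ·) fun i => w i (g i))) =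
      sweedlerSum ρ n c fun g => K fun i => Fin.contractNth j.castSucc (· * ·) w i (g i) := by
  induction n generalizing c with
  | zero =>
    rw [Fin.fin_one_eq_zero j]
    obtain ⟨φ, hφ⟩ : ∃ φ : E →ₗ[k] M, ∀ e, K e = φ (e 0) :=
      ⟨(MultilinearMap.ofSubsingletonₗ k k E M (0 : Fin 1)).symm K, fun e =>
        congrArg K (funext fun i => by rw [Fin.fin_one_eq_zero i])⟩
    simp [sweedlerSum, hφ, Fin.contractNth, (ρ c).convMul_apply]
  | succ n ih =>
    have hcons := map₂_cons_cons (n := n + 1) fun (w : WithConv (C →ₗ[k] E)) (c : C) => w c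
    have hcons' := map₂_cons_cons (n := n + 2) fun (w : WithConv (C →ₗ[k] E)) (c : C) => w c
    cases w using Fin.consCases with | _ u w
    cases j using Fin.cases with
    | zero =>
      cases w using Fin.consCases with | _ v w
      have hL := sum_conv_mul_left (ρ c) (fun i => ρ ((ρ c).right i))
        (sweedlerMap n ∘ₗ
          MultilinearMap.compLinearMapₗ (fun i => (w i).ofConv) ∘ₗ K.curryLeft) u v
      simp only [LinearMap.comp_apply, ← sweedlerSum_eq_sweedlerMap ρ] at hL
      simp only [Fin.castSucc_zero, contractNth_zero_cons, sweedlerSum, hcons, hcons']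
      exact hL
    | succ j =>
      rw [sweedlerSum_succ, sweedlerSum_succ]
      simp only [Fin.castSucc_succ, contractNth_succ_cons, hcons, hcons']
      exact Finset.sum_congr rfl fun i _ => ih ((ρ c).right i) j w (K.curryLeft (u ((ρ c).left i)))

end SweedlerSums

section Words

/-- The word obtained from `w` by multiplying its adjacent letters `wⱼ` and `wⱼ₊₁`. -/
def contract {R : Type*} [Mul R] (j : ℕ) (w : ℕ → R) (i : ℕ) : R :=
  if i < j then w i else if i = j then w i * w (i + 1) else w (i + 1)

variable {A R : Type*} [Monoid A] [Monoid R]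

/-- The prism words `e₀U, T e₁, …, T eⱼ, F, S eⱼ₊₁, …, S eₘ₋₁, V eₘ`, from which the chain
homotopy is built. -/
def prismWord (κ T S : A →* R) (U F V : R) (m j : ℕ) (e : ℕ → A) (i : ℕ) : R :=
  if i = 0 then κ (e 0) * U else if i ≤ j then T (e i) else if i = j + 1 then F
  else if i ≤ m then S (e (i - 1)) else V * κ (e (i - 1))

/-- The frame words `e₀U, T e₁, …, T eₘ, V eₘ₊₁`, from which the twist maps are built. -/
def frameWord (κ T : A →* R) (U V : R) (m : ℕ) (e : ℕ → A) (i : ℕ) : R :=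
  if i = 0 then κ (e 0) * U else if i ≤ m then T (e i) else V * κ (e i)

variable {κ T S : A →* R} {U F V : R}

lemma contract_prismWord_of_lt (hU : ∀ a, κ a * U = U * T a) {m i j : ℕ} (hij : i ≤ j)
    (hj : j < m) (e : ℕ → A) :
    contract i (prismWord κ T S U F V (m + 1) (j + 1) e) =
      prismWord κ T S U F V m j (contract i e) := by
  have hU' (a b : A) : κ a * U * T b = κ a * κ b * U := by rw [mul_assoc, ← hU, mul_assoc]
  funext l
  rcases l with _ | l
  · rcases i with _ | i <;> simp [contract, prismWord, hU']
  · simp only [contract, prismWord]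
    grind

lemma contract_prismWord_of_gt (hV : ∀ a, V * κ a = S a * V) {m i j : ℕ} (hij : j < i)
    (hi : i ≤ m) (e : ℕ → A) :
    contract (i + 1) (prismWord κ T S U F V (m + 1) j e) =
      prismWord κ T S U F V m j (contract i e) := by
  have hV' (a b : A) : S a * (V * κ b) = V * (κ a * κ b) := by
    rw [← mul_assoc, ← hV, mul_assoc]
  funext l
  cases l
  all_goals
    simp only [contract, prismWord]
    grind

lemma contract_prismWord_succ (hF : ∀ a, T a * F = F * S a) {m i : ℕ} (hi : i + 1 < m)
    (e : ℕ → A) :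
    contract (i + 1) (prismWord κ T S U F V m (i + 1) e) =
      contract (i + 1) (prismWord κ T S U F V m i e) := by
  funext l
  simp only [contract, prismWord]
  grind

end Words

section AlternatingSums

variable {k M : Type*} [Ring k] [AddCommGroup M] [Module k M]

lemma sum_neg_one_pow_smul_eq_neg {J : Type*} {s : Finset J} {p p' : J → ℕ} {D D' : J → M}
    (hp : ∀ i ∈ s, p i = p' i + 1) (hD : ∀ i ∈ s, D i = D' i) :
    ∑ i ∈ s, (-1 : k) ^ p i • D i = -∑ i ∈ s, (-1 : k) ^ p' i • D' i := by
  rw [← Finset.sum_neg_distrib]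
  exact Finset.sum_congr rfl fun i hi => by simp [hp i hi, hD i hi, pow_succ]

lemma sum_prism_faces (n : ℕ) (D D' : ℕ → ℕ → M)
    (hlt : ∀ i j, i ≤ j → j < n → D i (j + 1) = D' i j)
    (hgt : ∀ i j, j < i → i ≤ n → D (i + 1) j = D' i j)
    (hdiag : ∀ i < n, D (i + 1) (i + 1) = D (i + 1) i) :
    ∑ i ∈ Finset.range (n + 2), ∑ j ∈ Finset.range (n + 1), (-1 : k) ^ (i + j) • D i j +
      ∑ i ∈ Finset.range (n + 1), ∑ j ∈ Finset.range n, (-1 : k) ^ (i + j) • D' i j =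
        D 0 0 - D (n + 1) n := by
  induction n with
  | zero => simp [Finset.sum_range_succ, sub_eq_add_neg]
  | succ n ih =>
    have hcol : ∑ i ∈ Finset.range (n + 1), (-1 : k) ^ (i + (n + 1)) • D i (n + 1) =
        -∑ i ∈ Finset.range (n + 1), (-1 : k) ^ (i + n) • D' i n :=
      sum_neg_one_pow_smul_eq_neg (fun i _ => (add_assoc i n 1).symm)
        fun i hi => hlt i n (Finset.mem_range_succ_iff.1 hi) n.lt_succ_self
    have hrow : ∑ j ∈ Finset.range (n + 1), (-1 : k) ^ (n + 2 + j) • D (n + 2) j =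
        -∑ j ∈ Finset.range (n + 1), (-1 : k) ^ (n + 1 + j) • D' (n + 1) j :=
      sum_neg_one_pow_smul_eq_neg (fun j _ => by ring)
        fun j hj => hgt (n + 1) j (Finset.mem_range.1 hj) le_rfl
    have hsign (i : ℕ) : (-1 : k) ^ (i + i) = 1 := Even.neg_one_pow ⟨i, rfl⟩
    have hsign' : (-1 : k) ^ (n + 2 + (n + 1)) = -1 := Odd.neg_one_pow ⟨n + 1, by ring⟩
    have ih := ih (fun i j hij hj => hlt i j hij (by lia)) (fun i j hij hi => hgt i j hij (by lia))
      (fun i hi => hdiag i (by lia))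
    calc
      _ = (∑ i ∈ Finset.range (n + 2), ∑ j ∈ Finset.range (n + 1), (-1 : k) ^ (i + j) • D i j +
            ∑ i ∈ Finset.range (n + 1), ∑ j ∈ Finset.range n, (-1 : k) ^ (i + j) • D' i j) +
          (D (n + 1) (n + 1) - D (n + 2) (n + 1)) := by
        rw [Finset.sum_range_succ _ (n + 2),
          Finset.sum_range_succ (fun i => ∑ j ∈ Finset.range (n + 1), (-1 : k) ^ (i + j) • D' i j)]
        simp only [Finset.sum_range_succ _ (n + 1),
          Finset.sum_range_succ (fun j => (-1 : k) ^ (_ + j) • D' _ j) n, Finset.sum_add_distrib,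
          hcol, hrow, hsign, hsign', one_smul, neg_smul]
        abel
      _ = _ := by rw [ih, hdiag n n.lt_succ_self, sub_add_sub_cancel]

end AlternatingSums

noncomputable section Convolution

open WithConv

variable {k A B C D : Type*} [CommSemiring k] [Semiring A] [Algebra k A] [Semiring B] [Algebra k B]
  [AddCommMonoid C] [Module k C] [Coalgebra k C] [AddCommMonoid D] [Module k D] [Coalgebra k D]

/-- The homomorphism `Hom(C, A) → Hom(C, B)` of convolution algebras induced by `φ`. -/
def convMap (φ : A →ₐ[k] B) : WithConv (C →ₗ[k] A) →ₐ[k] WithConv (C →ₗ[k] B) where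
  toFun u := toConv (φ.toLinearMap ∘ₗ u.ofConv)
  map_one' := by ext; simp
  map_mul' u v := congrArg toConv (LinearMap.algHom_comp_convMul_distrib φ u v)
  map_zero' := by ext; simp
  map_add' u v := by ext; simp
  commutes' t := by ext; simp

@[simp]
lemma convMap_apply (φ : A →ₐ[k] B) (u : WithConv (C →ₗ[k] A)) (c : C) :
    convMap φ u c = φ (u c) := rfl

/-- The homomorphism `Hom(D, A) → Hom(C, A)` of convolution algebras induced by `ψ`. -/
def convComap (ψ : C →ₗc[k] D) : WithConv (D →ₗ[k] A) →ₐ[k] WithConv (C →ₗ[k] A) where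
  toFun u := toConv (u.ofConv ∘ₗ ψ.toLinearMap)
  map_one' := by ext; simp
  map_mul' u v := congrArg toConv (LinearMap.convMul_comp_coalgHom_distrib u v ψ)
  map_zero' := by ext; simp
  map_add' u v := by ext; simp
  commutes' t := by ext; simp

@[simp]
lemma convComap_apply (ψ : C →ₗc[k] D) (u : WithConv (D →ₗ[k] A)) (c : C) :
    convComap ψ u c = u (ψ c) := rfl

@[simp]
lemma convComap_convComap {D' : Type*} [AddCommMonoid D'] [Module k D'] [Coalgebra k D']
    (φ : C →ₗc[k] D) (ψ : D →ₗc[k] D') (u : WithConv (D' →ₗ[k] A)) :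
    convComap φ (convComap ψ u) = convComap (ψ.comp φ) u := rfl

/-- The embedding of `A` into the convolution algebra `Hom(C, A)` as the maps `c ↦ ε(c)a`. -/
def convConst (k A C : Type*) [CommSemiring k] [Semiring A] [Algebra k A] [AddCommMonoid C]
    [Module k C] [Coalgebra k C] : A →* WithConv (C →ₗ[k] A) :=
  MonoidHom.smulOneHom

lemma convConst_apply (a : A) (c : C) :
    convConst k A C a c = Coalgebra.counit (R := k) c • a := by
  simpa [convConst] using (Algebra.commutes _ _).symm.trans (Algebra.smul_def _ _).symm

lemma convConst_mul_apply (a : A) (u : WithConv (C →ₗ[k] A)) (c : C) :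
    (convConst k A C a * u) c = a * u c := by
  simp [convConst]

lemma mul_convConst_apply (a : A) (u : WithConv (C →ₗ[k] A)) (c : C) :
    (u * convConst k A C a) c = u c * a := by
  have h : convConst k A C a = MulOpposite.op a • 1 := by
    ext c
    simp [convConst, Algebra.commutes]
  simp [h]

@[simp]
lemma convMap_convConst (φ : A →ₐ[k] B) (a : A) :
    convMap φ (convConst k A C a) = convConst k B C (φ a) := by
  ext c
  simp [convConst]

@[simp]
lemma convComap_convConst (ψ : C →ₗc[k] D) (a : A) :
    convComap ψ (convConst k A D a) = convConst k A C a := by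
  ext c
  simp [convConst]

end Convolution

noncomputable section ConvolutionTensor

open WithConv

variable {k A C D F : Type*} [CommSemiring k] [Semiring A] [Algebra k A]
  [AddCommMonoid C] [Module k C] [Coalgebra k C] [AddCommMonoid D] [Module k D] [Coalgebra k D]
  [AddCommMonoid F] [Module k F] [Coalgebra k F]

variable (k C D)

/-- The coalgebra map `c ⊗ d ↦ ε(d)c`. -/
def coalgFst : C ⊗[k] D →ₗc[k] C :=
  (Coalgebra.TensorProduct.rid k k C).toCoalgHom.comp
    (Coalgebra.TensorProduct.map (.id k C) (Coalgebra.counitCoalgHom k D))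

/-- The coalgebra map `c ⊗ d ↦ ε(c)d`. -/
def coalgSnd : C ⊗[k] D →ₗc[k] D :=
  (Coalgebra.TensorProduct.lid k D).toCoalgHom.comp
    (Coalgebra.TensorProduct.map (Coalgebra.counitCoalgHom k C) (.id k D))

variable {k C D}

@[simp]
lemma coalgFst_tmul (c : C) (d : D) :
    coalgFst k C D (c ⊗ₜ d) = Coalgebra.counit (R := k) d • c := rfl

@[simp]
lemma coalgSnd_tmul (c : C) (d : D) :
    coalgSnd k C D (c ⊗ₜ d) = Coalgebra.counit (R := k) c • d := rfl

lemma convMul_apply_tmul {I J : Type*} {c : C} {d : D} (r : Coalgebra.Repr k c I)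
    (s : Coalgebra.Repr k d J) (u v : WithConv (C ⊗[k] D →ₗ[k] A)) :
    (u * v) (c ⊗ₜ d) = ∑ i ∈ r.index, ∑ j ∈ s.index,
      u (r.left i ⊗ₜ s.left j) * v (r.right i ⊗ₜ s.right j) := by
  rw [LinearMap.convMul_apply, TensorProduct.comul_tmul, ← r.eq, ← s.eq, Finset.sum_comm]
  simp [TensorProduct.sum_tmul, TensorProduct.tmul_sum]

lemma convMul_apply_tmul_tmul {I J K : Type*} {c : C} {d : D} {x : F} (r : Coalgebra.Repr k c I)
    (s : Coalgebra.Repr k d J) (t : Coalgebra.Repr k x K)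
    (u v : WithConv (C ⊗[k] (D ⊗[k] F) →ₗ[k] A)) :
    (u * v) (c ⊗ₜ (d ⊗ₜ x)) = ∑ i ∈ r.index, ∑ j ∈ s.index, ∑ p ∈ t.index,
      u (r.left i ⊗ₜ (s.left j ⊗ₜ t.left p)) * v (r.right i ⊗ₜ (s.right j ⊗ₜ t.right p)) := by
  let st : Coalgebra.Repr k (d ⊗ₜ[k] x) (J × K) :=
    { index := s.index ×ˢ t.index
      left := fun q => s.left q.1 ⊗ₜ t.left q.2
      right := fun q => s.right q.1 ⊗ₜ t.right q.2
      eq := by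
        rw [TensorProduct.comul_tmul, ← s.eq, ← t.eq, Finset.sum_product]
        simp [TensorProduct.sum_tmul, TensorProduct.tmul_sum, Finset.sum_comm (s := t.index)] }
  simp only [convMul_apply_tmul r st, st, Finset.sum_product]

lemma convMul_apply_tmul_assoc (u v : WithConv ((C ⊗[k] D) ⊗[k] F →ₗ[k] A)) (c : C)
    (d : D) (x : F) :
    (u * v) ((c ⊗ₜ d) ⊗ₜ x) =
      (convComap (Coalgebra.TensorProduct.assoc k k C D F).symm.toCoalgHom u *
        convComap (Coalgebra.TensorProduct.assoc k k C D F).symm.toCoalgHom v)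
          (c ⊗ₜ (d ⊗ₜ x)) := by
  rw [← map_mul]
  rfl

lemma coalgHom_ext_threefold {G : Type*} [AddCommMonoid G] [Module k G] [Coalgebra k G]
    {φ ψ : C ⊗[k] (D ⊗[k] F) →ₗc[k] G}
    (h : ∀ c d x, φ (c ⊗ₜ (d ⊗ₜ x)) = ψ (c ⊗ₜ (d ⊗ₜ x))) : φ = ψ := by
  refine CoalgHom.coe_linearMap_injective ?_
  ext c d x
  exact h c d x

lemma convComap_coalgFst_mul_convComap_coalgSnd_apply (u : WithConv (C →ₗ[k] A))
    (v : WithConv (D →ₗ[k] A)) (c : C) (d : D) :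
    (convComap (coalgFst k C D) u * convComap (coalgSnd k C D) v) (c ⊗ₜ d) = u c * v d := by
  let r := Coalgebra.Repr.arbitrary k c
  let s := Coalgebra.Repr.arbitrary k d
  calc
    _ = ∑ i ∈ r.index, ∑ j ∈ s.index, (Coalgebra.counit (R := k) (r.right i) • u (r.left i)) *
          (Coalgebra.counit (R := k) (s.left j) • v (s.right j)) := by
      simp [convMul_apply_tmul r s, smul_smul, mul_comm, -LinearMap.convMul_apply]
    _ = _ := by
      rw [← Finset.sum_mul_sum]
      simp only [← map_smul, ← map_sum, sum_counit_smul_left, Coalgebra.sum_counit_smul]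

lemma convComap_coalgSnd_mul_convComap_coalgFst_apply (u : WithConv (C →ₗ[k] A))
    (v : WithConv (D →ₗ[k] A)) (c : C) (d : D) :
    (convComap (coalgSnd k C D) v * convComap (coalgFst k C D) u) (c ⊗ₜ d) = v d * u c := by
  let r := Coalgebra.Repr.arbitrary k c
  let s := Coalgebra.Repr.arbitrary k d
  calc
    _ = ∑ j ∈ s.index, ∑ i ∈ r.index, (Coalgebra.counit (R := k) (s.right j) • v (s.left j)) *
          (Coalgebra.counit (R := k) (r.left i) • u (r.right i)) := by
      rw [Finset.sum_comm]
      simp [convMul_apply_tmul r s, smul_smul, mul_comm, -LinearMap.convMul_apply]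
    _ = _ := by
      rw [← Finset.sum_mul_sum]
      simp only [← map_smul, ← map_sum, sum_counit_smul_left, Coalgebra.sum_counit_smul]

lemma mul_convComap_coalgFst_apply {I : Type*} {c : C} (r : Coalgebra.Repr k c I)
    (u : WithConv (C →ₗ[k] A)) (w : WithConv (C ⊗[k] D →ₗ[k] A)) (d : D) :
    (w * convComap (coalgFst k C D) u) (c ⊗ₜ d) =
      ∑ i ∈ r.index, w (r.left i ⊗ₜ d) * u (r.right i) := by
  let s := Coalgebra.Repr.arbitrary k d
  rw [convMul_apply_tmul r s]
  refine Finset.sum_congr rfl fun i _ => ?_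
  conv_rhs => rw [← sum_counit_smul_left s]
  simp [TensorProduct.tmul_sum, Finset.sum_mul]

lemma convComap_coalgFst_mul_apply {I : Type*} {c : C} (r : Coalgebra.Repr k c I)
    (u : WithConv (C →ₗ[k] A)) (w : WithConv (C ⊗[k] D →ₗ[k] A)) (d : D) :
    (convComap (coalgFst k C D) u * w) (c ⊗ₜ d) =
      ∑ i ∈ r.index, u (r.left i) * w (r.right i ⊗ₜ d) := by
  let s := Coalgebra.Repr.arbitrary k d
  rw [convMul_apply_tmul r s]
  refine Finset.sum_congr rfl fun i _ => ?_
  conv_rhs => rw [← Coalgebra.sum_counit_smul s]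
  simp [TensorProduct.tmul_sum, Finset.mul_sum]

lemma mul_convComap_coalgSnd_apply {I : Type*} (c : C) {d : D} (s : Coalgebra.Repr k d I)
    (w : WithConv (C ⊗[k] D →ₗ[k] A)) (v : WithConv (D →ₗ[k] A)) :
    (w * convComap (coalgSnd k C D) v) (c ⊗ₜ d) =
      ∑ j ∈ s.index, w (c ⊗ₜ s.left j) * v (s.right j) := by
  let r := Coalgebra.Repr.arbitrary k c
  rw [convMul_apply_tmul r s, Finset.sum_comm]
  refine Finset.sum_congr rfl fun i _ => ?_
  conv_rhs => rw [← sum_counit_smul_left r]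
  simp [TensorProduct.sum_tmul, Finset.sum_mul, ← TensorProduct.smul_tmul']

/-- The extension of a measuring `σ` of `A` by `C` to convolution algebras: the image of `u` is
`c ⊗ d ↦ σ(u(d))(c)`. -/
def convMeasure (σ : A →ₐ[k] WithConv (C →ₗ[k] A)) :
    WithConv (D →ₗ[k] A) →ₐ[k] WithConv (C ⊗[k] D →ₗ[k] A) :=
  let L : A →ₗ[k] C →ₗ[k] A := (WithConv.linearEquiv k _).toLinearMap ∘ₗ σ.toLinearMap
  let φ : WithConv (D →ₗ[k] A) →ₗ[k] WithConv (C ⊗[k] D →ₗ[k] A) :=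
    (WithConv.linearEquiv k _).symm.toLinearMap ∘ₗ TensorProduct.uncurry (.id k) C D A ∘ₗ
      LinearMap.lflip.toLinearMap ∘ₗ LinearMap.llcomp k D A _ L ∘ₗ
        (WithConv.linearEquiv k _).toLinearMap
  have hφ (u : WithConv (D →ₗ[k] A)) (c : C) (d : D) : φ u (c ⊗ₜ d) = σ (u d) c := rfl
  AlgHom.ofLinearMap φ
    (by
      ext c d
      simp [hφ, Algebra.algebraMap_eq_smul_one, smul_smul, mul_comm])
    (fun u v => by
      ext c d
      let r := Coalgebra.Repr.arbitrary k c
      let s := Coalgebra.Repr.arbitrary k d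
      simpa [hφ, convMul_apply_tmul r s, r.convMul_apply, s.convMul_apply,
        -LinearMap.convMul_apply] using Finset.sum_comm)

@[simp]
lemma convMeasure_apply_tmul (σ : A →ₐ[k] WithConv (C →ₗ[k] A)) (u : WithConv (D →ₗ[k] A)) (c : C)
    (d : D) : convMeasure σ u (c ⊗ₜ d) = σ (u d) c := rfl

lemma convMeasure_convConst (σ : A →ₐ[k] WithConv (C →ₗ[k] A)) (a : A) :
    convMeasure σ (convConst k A D a) = convComap (coalgFst k C D) (σ a) := by
  ext c d
  exact (congr(σ $(convConst_apply a d) c)).trans (by simp)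

lemma convMeasure_convComap {D' : Type*} [AddCommMonoid D'] [Module k D'] [Coalgebra k D']
    (σ : A →ₐ[k] WithConv (C →ₗ[k] A)) (ψ : D →ₗc[k] D') (u : WithConv (D' →ₗ[k] A)) :
    convMeasure σ (convComap ψ u) =
      convComap (Coalgebra.TensorProduct.map (.id k C) ψ) (convMeasure σ u) := by
  ext c d
  rfl

/-- The composite `a ↦ (c ⊗ d ↦ σ(τ(a)(d))(c))` of two measurings of `A`. -/
def measuringComp (σ : A →ₐ[k] WithConv (C →ₗ[k] A)) (τ : A →ₐ[k] WithConv (D →ₗ[k] A)) :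
    A →ₐ[k] WithConv (C ⊗[k] D →ₗ[k] A) :=
  (convMeasure σ).comp τ

@[simp]
lemma measuringComp_apply_tmul (σ : A →ₐ[k] WithConv (C →ₗ[k] A))
    (τ : A →ₐ[k] WithConv (D →ₗ[k] A)) (a : A) (c : C) (d : D) :
    measuringComp σ τ a (c ⊗ₜ d) = σ (τ a d) c := rfl

end ConvolutionTensor

section HochschildChains

variable (k A E : Type*) [CommRing k] [Ring A] [Algebra k A] [Ring E] [Algebra k E]

/-- The `k`-module `Ā = A / k·1`. -/
abbrev ReducedModule : Type _ := A ⧸ Submodule.span k {(1 : A)}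

/-- The normalized Hochschild chains `E ⊗ Ā^{⊗r}` of `A` with coefficients in `E`. -/
abbrev HochschildChains (r : ℕ) : Type _ := E ⊗[k] ⨂[k]^r (ReducedModule k A)

variable {k A E}

lemma hochschildChains_ext {M : Type*} [AddCommGroup M] [Module k M] {r : ℕ}
    {φ ψ : HochschildChains k A E r →ₗ[k] M}
    (h : ∀ (x : E) (a : Fin r → A),
      φ (x ⊗ₜ PiTensorProduct.tprod k fun i => (Submodule.span k {(1 : A)}).mkQ (a i)) =
        ψ (x ⊗ₜ PiTensorProduct.tprod k fun i => (Submodule.span k {(1 : A)}).mkQ (a i))) :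
    φ = ψ := by
  ext x a
  obtain ⟨a, rfl⟩ : ∃ a' : Fin r → A, a = fun i => (Submodule.span k {(1 : A)}).mkQ (a' i) :=
    ⟨_, funext fun i => (Function.surjInv_eq (Submodule.mkQ_surjective _) (a i)).symm⟩
  exact h x a

/-- `bd` is the Hochschild boundary of `A` with coefficients in `E`, which is an `A`-bimodule
through `ι`. -/
def IsHochschildBoundary (ι : A →ₐ[k] E)
    (bd : ∀ r, HochschildChains k A E (r + 1) →ₗ[k] HochschildChains k A E r) : Prop :=
  ∀ (r : ℕ) (x : E) (a : Fin (r + 1) → A),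
    bd r (x ⊗ₜ PiTensorProduct.tprod k fun i => (Submodule.span k {(1 : A)}).mkQ (a i)) =
      (x * ι (a 0)) ⊗ₜ
          (PiTensorProduct.tprod k fun i : Fin r => (Submodule.span k {(1 : A)}).mkQ (a i.succ))
        + (∑ j : Fin r, ((-1 : k) ^ ((j : ℕ) + 1)) •
            (x ⊗ₜ PiTensorProduct.tprod k fun m : Fin r =>
              if (m : ℕ) < (j : ℕ) then (Submodule.span k {(1 : A)}).mkQ (a m.castSucc)
              else if (m : ℕ) = (j : ℕ) then
                (Submodule.span k {(1 : A)}).mkQ (a j.castSucc * a j.succ)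
              else (Submodule.span k {(1 : A)}).mkQ (a m.succ)))
        + ((-1 : k) ^ (r + 1)) •
            ((ι (a (Fin.last r)) * x) ⊗ₜ
              PiTensorProduct.tprod k fun i : Fin r =>
                (Submodule.span k {(1 : A)}).mkQ (a i.castSucc))

/-- The chain `eᵣ₊₁ x e₀ ⊗ ē₁ ⊗ ⋯ ⊗ ēᵣ`, where the bar stands for `q`. Letting both end letters
act on `x` makes the outer faces of the Hochschild boundary contractions of adjacent letters, like
the inner ones. -/
noncomputable def barChain (q : E →ₗ[k] ReducedModule k A) (r : ℕ) (x : E) :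
    MultilinearMap k (fun _ : Fin (r + 2) => E) (HochschildChains k A E r) :=
  LinearMap.uncurryLeft
    { toFun := fun e₀ => MultilinearMap.uncurryRight
        ((LinearMap.lcomp k _ (LinearMap.mulRight k (x * e₀)) ∘ₗ
          (TensorProduct.mk k E _).flip).compMultilinearMap
            ((PiTensorProduct.tprod k).compLinearMap fun _ : Fin r => q))
      map_add' := fun e e' => by
        ext g
        simp [mul_add, mul_assoc]
      map_smul' := fun t e => by
        ext g
        simp [mul_assoc, TensorProduct.smul_tmul'] }

lemma barChain_apply (q : E →ₗ[k] ReducedModule k A) (r : ℕ) (x : E) (e : Fin (r + 2) → E) :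
    barChain q r x e = (e (Fin.last (r + 1)) * (x * e 0)) ⊗ₜ
      PiTensorProduct.tprod k fun i : Fin r => q (e i.castSucc.succ) := rfl

variable {ι : A →ₐ[k] E} {q : E →ₗ[k] ReducedModule k A}
  {bd : ∀ r, HochschildChains k A E (r + 1) →ₗ[k] HochschildChains k A E r}

lemma hochschildChains_ext_barChain (hq : ∀ a, q (ι a) = (Submodule.span k {(1 : A)}).mkQ a)
    {M : Type*} [AddCommGroup M] [Module k M] {r : ℕ} {φ ψ : HochschildChains k A E r →ₗ[k] M}
    (h : ∀ (x : E) (e : ℕ → A),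
      φ (barChain q r x fun i => ι (e i)) = ψ (barChain q r x fun i => ι (e i))) : φ = ψ := by
  refine hochschildChains_ext fun x a => ?_
  let e (i : ℕ) : A := if hi : 0 < i ∧ i < r + 1 then a ⟨i - 1, by lia⟩ else 1
  have hx : (barChain q r x fun i => ι (e i)) =
      x ⊗ₜ PiTensorProduct.tprod k fun i => (Submodule.span k {(1 : A)}).mkQ (a i) := by
    simp [barChain_apply, e, hq]
  simpa only [hx] using h x e

lemma map_contractNth_castSucc_succ (hq : ∀ a, q (ι a) = (Submodule.span k {(1 : A)}).mkQ a)
    {r : ℕ} {e : Fin (r + 3) → E} {a : Fin (r + 1) → A} (he : ∀ i, e i.castSucc.succ = ι (a i))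
    (j i : Fin r) :
    q (Fin.contractNth j.castSucc.succ.castSucc (· * ·) e i.castSucc.succ) =
      if (i : ℕ) < (j : ℕ) then (Submodule.span k {(1 : A)}).mkQ (a i.castSucc)
      else if (i : ℕ) = (j : ℕ) then (Submodule.span k {(1 : A)}).mkQ (a j.castSucc * a j.succ)
      else (Submodule.span k {(1 : A)}).mkQ (a i.succ) := by
  rcases lt_trichotomy (i : ℕ) j with hlt | heq | hgt
  · rw [if_pos hlt, Fin.contractNth_apply_of_lt _ _ _ _ (by simpa using hlt), ← hq, ← he]
    rfl
  · obtain rfl := Fin.ext heq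
    rw [if_neg (lt_irrefl _), if_pos rfl, Fin.contractNth_apply_of_eq _ _ _ _ (by simp), ← hq,
      map_mul ι, ← he, ← he]
    rfl
  · rw [if_neg hgt.not_gt, if_neg hgt.ne',
      Fin.contractNth_apply_of_gt _ _ _ _ (by simpa using hgt), ← hq, ← he]
    rfl

lemma IsHochschildBoundary.map_barChain (hbd : IsHochschildBoundary ι bd)
    (hq : ∀ a, q (ι a) = (Submodule.span k {(1 : A)}).mkQ a) (r : ℕ) (x : E)
    (e : Fin (r + 3) → E) (a : Fin (r + 1) → A) (he : ∀ i, e i.castSucc.succ = ι (a i)) :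
    bd r (barChain q (r + 1) x e) = ∑ j : Fin (r + 2),
      (-1 : k) ^ (j : ℕ) • barChain q r x (Fin.contractNth j.castSucc (· * ·) e) := by
  have hinner (i : Fin (r + 1)) : q (e i.castSucc.succ) =
      (Submodule.span k {(1 : A)}).mkQ (a i) := by rw [he, hq]
  have hfirst : e 1 = ι (a 0) := he 0
  have hlast : e (Fin.last (r + 1)).castSucc = ι (a (Fin.last r)) := he (Fin.last r)
  rw [Fin.sum_univ_succ, Fin.sum_univ_castSucc, ← add_assoc, Fin.val_zero, pow_zero, one_smul]
  simp only [barChain_apply, hinner]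
  rw [hbd]
  congr 2
  · congr 1
    · simp [Fin.contractNth, hfirst, mul_assoc]
    · exact congrArg _ (funext fun i => (hinner i.succ).symm)
  · refine Finset.sum_congr rfl fun j _ => ?_
    congr 2
    · simp [Fin.contractNth, j.2.le, j.2.ne']
    · exact congrArg _ (funext fun i => (map_contractNth_castSucc_succ hq he j i).symm)
  · congr 1
    · simp [Fin.contractNth, hlast, mul_assoc]
    · refine congrArg _ (funext fun i => ?_)
      rw [Fin.contractNth_apply_of_lt _ _ _ _ (by simp)]
      exact (hinner i.castSucc).symm

end HochschildChains

noncomputable section TwistMaps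

open WithConv

variable {k A E C I : Type*} [CommRing k] [Ring A] [Algebra k A] [Ring E] [Algebra k E]
  [AddCommMonoid C] [Module k C] [Coalgebra k C] (ρ : ∀ c : C, Coalgebra.Repr k c I)

variable (q : E →ₗ[k] ReducedModule k A)

/-- The chain `∑ barChain (w₀ c⁽¹⁾, …, wᵣ₊₁ c⁽ʳ⁺²⁾)` obtained by evaluating a word of maps `C → E`
on the iterated comultiplication of `c`. -/
def wordChain (r : ℕ) (x : E) (w : ℕ → WithConv (C →ₗ[k] E)) (c : C) : HochschildChains k A E r :=
  sweedlerSum ρ (r + 1) c fun g => barChain q r x fun i => w i (g i)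

variable {q}

lemma wordChain_congr {r : ℕ} (x : E) {w w' : ℕ → WithConv (C →ₗ[k] E)}
    (h : ∀ i ≤ r + 1, w i = w' i) (c : C) : wordChain ρ q r x w c = wordChain ρ q r x w' c := by
  have hletter (i : Fin (r + 2)) : w i = w' i := h i (by lia)
  simp only [wordChain, hletter]

lemma wordChain_eq_sweedlerMap (r : ℕ) (x : E) (w : ℕ → WithConv (C →ₗ[k] E)) (c : C) :
    wordChain ρ q r x w c =
      sweedlerMap (r + 1) ((barChain q r x).compLinearMap fun i => (w i).ofConv) c := by
  rw [← sweedlerSum_eq_sweedlerMap ρ]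
  rfl

lemma IsHochschildBoundary.map_wordChain {ι : A →ₐ[k] E}
    {bd : ∀ r, HochschildChains k A E (r + 1) →ₗ[k] HochschildChains k A E r}
    (hbd : IsHochschildBoundary ι bd) (hq : ∀ a, q (ι a) = (Submodule.span k {(1 : A)}).mkQ a)
    (r : ℕ) (x : E) (w : ℕ → WithConv (C →ₗ[k] E)) (t : ℕ → WithConv (C →ₗ[k] A))
    (hw : ∀ i ≤ r, w (i + 1) = convMap ι (t i)) (c : C) :
    bd r (wordChain ρ q (r + 1) x w c) =
      ∑ j ∈ Finset.range (r + 2), (-1 : k) ^ j • wordChain ρ q r x (contract j w) c := by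
  have hface (g : Fin (r + 3) → C) := hbd.map_barChain hq r x (fun i => w i (g i))
    (fun i => t i (g i.castSucc.succ)) fun i => by simp [hw i (by lia)]
  have hcontract (j : Fin (r + 2)) :=
    sweedlerSum_contractNth ρ (r + 1) c j (fun i => w i) (barChain q r x)
  have hsmul (j : Fin (r + 2)) (F : (Fin (r + 3) → C) → HochschildChains k A E r) :=
    map_sweedlerSum ρ (LinearMap.lsmul k (HochschildChains k A E r) ((-1 : k) ^ (j : ℕ)))
      (r + 2) c F
  simp only [LinearMap.lsmul_apply] at hsmul
  rw [wordChain, map_sweedlerSum, Finset.sum_range]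
  simp only [hface, sweedlerSum_sum, ← hsmul, hcontract]
  rfl

/-- The action of `c` on `Ā` through the measuring `τ` of `A` by `C`. -/
def reducedAction (τ : A →ₐ[k] WithConv (C →ₗ[k] A)) (c : C) :
    ReducedModule k A →ₗ[k] ReducedModule k A :=
  Submodule.mapQ _ _
    (LinearMap.applyₗ c ∘ₗ (WithConv.linearEquiv k _).toLinearMap ∘ₗ τ.toLinearMap) <| by
      rw [Submodule.span_singleton_le_iff_mem]
      exact Submodule.mem_span_singleton.2
        ⟨Coalgebra.counit c, by simp [Algebra.algebraMap_eq_smul_one]⟩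

@[simp]
lemma reducedAction_mk (τ : A →ₐ[k] WithConv (C →ₗ[k] A)) (c : C) (a : A) :
    reducedAction τ c (Submodule.Quotient.mk a) = Submodule.Quotient.mk (τ a c) := rfl

section TwistMap

variable (τ : A →ₐ[k] WithConv (C →ₗ[k] A)) (U V : WithConv (C →ₗ[k] E))

/-- The endomorphism `x ⊗ ā₁ ⊗ ⋯ ⊗ āᵣ ↦ V(c⁽³⁾) x U(c⁽¹⁾) ⊗ τ(ā₁ ⊗ ⋯ ⊗ āᵣ)(c⁽²⁾)` of the Hochschild
chains. -/
def twistMap (r : ℕ) (c : C) : HochschildChains k A E r →ₗ[k] HochschildChains k A E r :=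
  sweedlerSum ρ (r + 1) c fun g =>
    TensorProduct.map (LinearMap.mulLeft k (V (g (Fin.last _))) ∘ₗ LinearMap.mulRight k (U (g 0)))
      (PiTensorProduct.map fun i => reducedAction τ (g i.castSucc.succ))

variable {ι : A →ₐ[k] E}

lemma twistMap_tmul (r : ℕ) (x : E) (a : Fin r → A) (c : C) :
    twistMap ρ τ U V r c
        (x ⊗ₜ PiTensorProduct.tprod k fun i => (Submodule.span k {(1 : A)}).mkQ (a i)) =
      sweedlerSum ρ (r + 1) c fun g => (V (g (Fin.last _)) * x * U (g 0)) ⊗ₜ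
        PiTensorProduct.tprod k fun i =>
          (Submodule.span k {(1 : A)}).mkQ (τ (a i) (g i.succ.castSucc)) := by
  rw [twistMap, ← LinearMap.applyₗ_apply_apply, map_sweedlerSum]
  refine congrArg (sweedlerSum ρ _ c) (funext fun g => ?_)
  simp [PiTensorProduct.map_tprod, mul_assoc]

lemma twistMap_barChain (hq : ∀ a, q (ι a) = (Submodule.span k {(1 : A)}).mkQ a) (r : ℕ) (x : E)
    (e : ℕ → A) (c : C) :
    twistMap ρ τ U V r c (barChain q r x fun i => ι (e i)) =
      wordChain ρ q r x
        (frameWord ((convConst k E C).comp ι) ((convMap ι).comp τ : A →ₐ[k] _) U V r e) c := by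
  rw [twistMap, ← LinearMap.applyₗ_apply_apply, map_sweedlerSum]
  refine congrArg (sweedlerSum ρ _ c) (funext fun g => ?_)
  simp [barChain_apply, hq, PiTensorProduct.map_tprod, frameWord, mul_assoc,
    convConst_mul_apply, mul_convConst_apply, -LinearMap.convMul_apply]

end TwistMap

section TensorCoalgebra

variable {D J : Type*} [AddCommMonoid D] [Module k D] [Coalgebra k D]
  (ρ' : ∀ d : D, Coalgebra.Repr k d J) {ι : A →ₐ[k] E} {q : E →ₗ[k] ReducedModule k A}

lemma twistMap_convComap (hq : ∀ a, q (ι a) = (Submodule.span k {(1 : A)}).mkQ a) (ψ : C →ₗc[k] D)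
    (τ : A →ₐ[k] WithConv (D →ₗ[k] A)) (U V : WithConv (D →ₗ[k] E)) (r : ℕ) (c : C) :
    twistMap ρ ((convComap ψ).comp τ) (convComap ψ U) (convComap ψ V) r c =
      twistMap ρ' τ U V r (ψ c) :=
  hochschildChains_ext_barChain hq fun x e => by
    rw [twistMap_barChain ρ _ _ _ hq, twistMap_barChain ρ' _ _ _ hq, wordChain_eq_sweedlerMap,
      wordChain_eq_sweedlerMap, ← sweedlerMap_compLinearMap_coalgHom ψ]
    congr 2
    ext g
    refine congrArg (barChain q r x) (funext fun i => ?_)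
    simp only [frameWord]
    split_ifs <;> simp [convConst_mul_apply, mul_convConst_apply, -LinearMap.convMul_apply]

lemma twistMap_comp (hq : ∀ a, q (ι a) = (Submodule.span k {(1 : A)}).mkQ a)
    {σ : A →ₐ[k] WithConv (C →ₗ[k] A)} {τ : A →ₐ[k] WithConv (D →ₗ[k] A)}
    {στ : A →ₐ[k] WithConv (C ⊗[k] D →ₗ[k] A)}
    (hστ : ∀ a c d, στ a (c ⊗ₜ d) = σ (τ a d) c) (U V : WithConv (C →ₗ[k] E))
    (U' V' : WithConv (D →ₗ[k] E)) (r : ℕ) {K : Type*}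
    (ρ'' : ∀ t : C ⊗[k] D, Coalgebra.Repr k t K) (c : C) (d : D) :
    twistMap ρ σ U V r c ∘ₗ twistMap ρ' τ U' V' r d =
      twistMap ρ'' στ (convComap (coalgSnd k C D) U' * convComap (coalgFst k C D) U)
        (convComap (coalgFst k C D) V * convComap (coalgSnd k C D) V') r (c ⊗ₜ d) :=
  hochschildChains_ext_barChain hq fun x e => by
    rw [twistMap_barChain ρ'' _ _ _ hq, wordChain_eq_sweedlerMap, ← sweedlerSum_tmul ρ ρ']
    simp only [barChain_apply, hq, LinearMap.comp_apply, twistMap_tmul, map_sweedlerSum]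
    refine congrArg (sweedlerSum ρ' _ d) (funext fun g' => ?_)
    refine congrArg (sweedlerSum ρ _ c) (funext fun g => ?_)
    simp [barChain_apply, frameWord, hστ, hq, mul_assoc (G := E), convConst_mul_apply,
      mul_convConst_apply, convComap_coalgSnd_mul_convComap_coalgFst_apply,
      convComap_coalgFst_mul_convComap_coalgSnd_apply, -LinearMap.convMul_apply]

end TensorCoalgebra

/-- Two measurings `τ` and `τ'` of `A` by `C` intertwined by `F`, together with `V` and `U` such
that multiplication by `V` on the left and `U` on the right of `E` is compatible with `τ'` and
`τ`. -/
structure TwistIntertwiner (ι : A →ₐ[k] E) (C : Type*) [AddCommMonoid C] [Module k C]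
    [Coalgebra k C] where
  τ : A →ₐ[k] WithConv (C →ₗ[k] A)
  τ' : A →ₐ[k] WithConv (C →ₗ[k] A)
  U : WithConv (C →ₗ[k] E)
  F : WithConv (C →ₗ[k] A)
  V : WithConv (C →ₗ[k] E)
  const_mul_U : ∀ a, convConst k E C (ι a) * U = U * convMap ι (τ a)
  τ_mul_F : ∀ a, convMap ι (τ a) * convMap ι F = convMap ι F * convMap ι (τ' a)
  V_mul_const : ∀ a, V * convConst k E C (ι a) = convMap ι (τ' a) * V

namespace TwistIntertwiner

variable {ι : A →ₐ[k] E} (D : TwistIntertwiner ι C) {q : E →ₗ[k] ReducedModule k A}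

/-- The prism words of an intertwiner. -/
def word : ℕ → ℕ → (ℕ → A) → ℕ → WithConv (C →ₗ[k] E) :=
  prismWord ((convConst k E C).comp ι) ((convMap ι).comp D.τ : A →ₐ[k] _)
    ((convMap ι).comp D.τ' : A →ₐ[k] _) D.U (convMap ι D.F) D.V

/-- The letters of the prism words other than the first and the last one, before the inclusion of
`A` in `E`. -/
def letter (j : ℕ) (e : ℕ → A) (i : ℕ) : WithConv (C →ₗ[k] A) :=
  if i < j then D.τ (e (i + 1)) else if i = j then D.F else D.τ' (e i)

lemma word_zero (m j : ℕ) (e : ℕ → A) : D.word m j e 0 = convConst k E C (ι (e 0)) * D.U := rfl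

lemma word_succ {m j i : ℕ} (hj : j < m) (hi : i < m) (e : ℕ → A) :
    D.word m j e (i + 1) = convMap ι (D.letter j e i) := by
  rcases lt_trichotomy i j with h | rfl | h
  · simp [word, prismWord, letter, h]
  · simp [word, prismWord, letter]
  · simp [word, prismWord, letter, h.not_gt, h.ne', hi]

lemma word_last {m j : ℕ} (hj : j < m) (e : ℕ → A) :
    D.word m j e (m + 1) = D.V * convConst k E C (ι (e m)) := by
  simp [word, prismWord, hj.ne', hj.not_gt]

/-- The `j`-th summand of the homotopy: it inserts `F` after the first `j` tensor factors, on which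
`C` acts through `τ`, while it acts through `τ'` on the remaining ones. -/
def prismMap (r : ℕ) (j : Fin (r + 1)) (c : C) :
    HochschildChains k A E r →ₗ[k] HochschildChains k A E (r + 1) :=
  sweedlerSum ρ (r + 2) c fun g =>
    TensorProduct.map
      (LinearMap.mulLeft k (D.V (g (Fin.last _))) ∘ₗ LinearMap.mulRight k (D.U (g 0)))
      (PiTensorProduct.lift ((PiTensorProduct.tprod k).curryMid j
          ((Submodule.span k {(1 : A)}).mkQ (D.F (g j.castSucc.succ)))) ∘ₗ
        PiTensorProduct.map fun i =>
          reducedAction (if i.castSucc < j then D.τ else D.τ') (g (j.succAbove i).castSucc.succ))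

lemma prismMap_barChain (hq : ∀ a, q (ι a) = (Submodule.span k {(1 : A)}).mkQ a) (r : ℕ) (x : E)
    (j : Fin (r + 1)) (e : ℕ → A) (c : C) :
    D.prismMap ρ r j c (barChain q r x fun i => ι (e i)) =
      wordChain ρ q (r + 1) x (D.word (r + 1) j e) c := by
  rw [prismMap, ← LinearMap.applyₗ_apply_apply, map_sweedlerSum]
  refine congrArg (sweedlerSum ρ _ c) (funext fun g => ?_)
  have hword (i : Fin (r + 1)) : D.word (r + 1) j e (i + 1) = convMap ι (D.letter j e i) :=
    D.word_succ j.2 i.2 e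
  have hF : D.letter j e j = D.F := by simp [letter]
  have hletter (i : Fin r) : D.letter j e (j.succAbove i) =
      (if i.castSucc < j then D.τ else D.τ') (e (i + 1)) := by
    split_ifs with hij
    · rw [Fin.succAbove_of_castSucc_lt _ _ hij]
      exact if_pos hij
    · rw [Fin.succAbove_of_le_castSucc _ _ (not_lt.1 hij)]
      grind [letter]
  have hinner : (fun i : Fin (r + 1) => q (D.word (r + 1) j e (i + 1) (g i.castSucc.succ))) =
      j.insertNth ((Submodule.span k {(1 : A)}).mkQ (D.F (g j.castSucc.succ))) fun i =>
        reducedAction (if i.castSucc < j then D.τ else D.τ') (g (j.succAbove i).castSucc.succ)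
          (q (ι (e (i + 1)))) := by
    refine (Fin.eq_insertNth_iff ..).2 ⟨?_, funext fun i => ?_⟩
    · simp [hword, hF, hq]
    · simp [Fin.removeNth, hword, hletter, hq]
  simp [barChain_apply, PiTensorProduct.map_tprod, hinner, word_zero, D.word_last j.2, mul_assoc,
    convConst_mul_apply, mul_convConst_apply, -LinearMap.convMul_apply]

/-- The chain homotopy from `twistMap τ U (FV)` to `twistMap τ' (UF) V`. -/
def homotopy (r : ℕ) (c : C) : HochschildChains k A E r →ₗ[k] HochschildChains k A E (r + 1) :=
  ∑ j : Fin (r + 1), (-1 : k) ^ (j : ℕ) • D.prismMap ρ r j c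

lemma homotopy_barChain (hq : ∀ a, q (ι a) = (Submodule.span k {(1 : A)}).mkQ a) (r : ℕ)
    (x : E) (e : ℕ → A) (c : C) :
    D.homotopy ρ r c (barChain q r x fun i => ι (e i)) =
      ∑ j ∈ Finset.range (r + 1),
        (-1 : k) ^ j • wordChain ρ q (r + 1) x (D.word (r + 1) j e) c := by
  simp only [homotopy, LinearMap.sum_apply, LinearMap.smul_apply, Finset.sum_range,
    D.prismMap_barChain ρ hq]

lemma contract_word_of_lt {m i j : ℕ} (hij : i ≤ j) (hj : j < m) (e : ℕ → A) :
    contract i (D.word (m + 1) (j + 1) e) = D.word m j (contract i e) :=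
  contract_prismWord_of_lt (fun a => by simpa using D.const_mul_U a) hij hj e

lemma contract_word_of_gt {m i j : ℕ} (hij : j < i) (hi : i ≤ m) (e : ℕ → A) :
    contract (i + 1) (D.word (m + 1) j e) = D.word m j (contract i e) :=
  contract_prismWord_of_gt (fun a => by simpa using D.V_mul_const a) hij hi e

lemma contract_word_succ {m i : ℕ} (hi : i + 1 < m) (e : ℕ → A) :
    contract (i + 1) (D.word m (i + 1) e) = contract (i + 1) (D.word m i e) :=
  contract_prismWord_succ (fun a => by simpa using D.τ_mul_F a) hi e

lemma contract_zero_word (m : ℕ) (e : ℕ → A) :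
    contract 0 (D.word (m + 1) 0 e) = frameWord ((convConst k E C).comp ι)
      ((convMap ι).comp D.τ' : A →ₐ[k] _) (D.U * convMap ι D.F) D.V m e := by
  funext i
  cases i <;> simp [contract, word, prismWord, frameWord, mul_assoc]

lemma contract_add_one_word {m i : ℕ} (hi : i ≤ m + 1) (e : ℕ → A) :
    contract (m + 1) (D.word (m + 1) m e) i = frameWord ((convConst k E C).comp ι)
      ((convMap ι).comp D.τ : A →ₐ[k] _) D.U (convMap ι D.F * D.V) m e i := by
  rcases hi.lt_or_eq with h | rfl
  · simp [contract, word, prismWord, frameWord, h, Nat.lt_succ_iff.1 h]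
  · simp [contract, word, prismWord, frameWord, mul_assoc]

variable {bd : ∀ r, HochschildChains k A E (r + 1) →ₗ[k] HochschildChains k A E r}

lemma bd_homotopy_barChain_eq_sum (hbd : IsHochschildBoundary ι bd)
    (hq : ∀ a, q (ι a) = (Submodule.span k {(1 : A)}).mkQ a) (r : ℕ) (x : E) (e : ℕ → A) (c : C) :
    bd r (D.homotopy ρ r c (barChain q r x fun i => ι (e i))) =
      ∑ i ∈ Finset.range (r + 2), ∑ j ∈ Finset.range (r + 1),
        (-1 : k) ^ (i + j) • wordChain ρ q r x (contract i (D.word (r + 1) j e)) c := by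
  have hface (j : ℕ) (hj : j ∈ Finset.range (r + 1)) :=
    hbd.map_wordChain ρ hq r x (D.word (r + 1) j e) (D.letter j e)
      (fun i hi => D.word_succ (Finset.mem_range.1 hj) (Nat.lt_succ_iff.2 hi) e) c
  rw [D.homotopy_barChain ρ hq, map_sum, Finset.sum_comm]
  refine Finset.sum_congr rfl fun j hj => ?_
  rw [map_smul, hface j hj, Finset.smul_sum]
  exact Finset.sum_congr rfl fun i _ => by rw [smul_smul, ← pow_add, add_comm]

lemma bd_homotopy_barChain (hbd : IsHochschildBoundary ι bd)
    (hq : ∀ a, q (ι a) = (Submodule.span k {(1 : A)}).mkQ a) (r : ℕ) (x : E) (e : ℕ → A) (c : C) :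
    bd r (D.homotopy ρ r c (barChain q r x fun i => ι (e i))) +
      ∑ i ∈ Finset.range (r + 1), ∑ j ∈ Finset.range r,
        (-1 : k) ^ (i + j) • wordChain ρ q r x (D.word r j (contract i e)) c =
    (twistMap ρ D.τ' (D.U * convMap ι D.F) D.V r c -
      twistMap ρ D.τ D.U (convMap ι D.F * D.V) r c) (barChain q r x fun i => ι (e i)) := by
  rw [LinearMap.sub_apply, twistMap_barChain ρ _ _ _ hq, twistMap_barChain ρ _ _ _ hq,
    ← contract_zero_word, ← wordChain_congr ρ x (fun i hi => D.contract_add_one_word hi e),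
    D.bd_homotopy_barChain_eq_sum ρ hbd hq]
  refine sum_prism_faces r
    (fun i j => wordChain ρ q r x (contract i (D.word (r + 1) j e)) c)
    (fun i j => wordChain ρ q r x (D.word r j (contract i e)) c)
    (fun i j hij hj => ?_) (fun i j hij hi => ?_) (fun i hi => ?_)
  · rw [D.contract_word_of_lt hij hj]
  · rw [D.contract_word_of_gt hij hi]
  · rw [D.contract_word_succ (Nat.succ_lt_succ hi)]

lemma homotopy_bd_barChain (hbd : IsHochschildBoundary ι bd)
    (hq : ∀ a, q (ι a) = (Submodule.span k {(1 : A)}).mkQ a) (r : ℕ) (x : E) (e : ℕ → A) (c : C) :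
    D.homotopy ρ r c (bd r (barChain q (r + 1) x fun i => ι (e i))) =
      ∑ i ∈ Finset.range (r + 2), ∑ j ∈ Finset.range (r + 1),
        (-1 : k) ^ (i + j) • wordChain ρ q (r + 1) x (D.word (r + 1) j (contract i e)) c := by
  have hface (i : Fin (r + 2)) :
      Fin.contractNth i.castSucc (· * ·) (fun l : Fin (r + 3) => ι (e l)) =
        fun l : Fin (r + 2) => ι (contract i e l) := by
    funext l
    simp [Fin.contractNth, contract, apply_ite ι]
  rw [hbd.map_barChain hq r x (fun l => ι (e l)) (fun l => e (l + 1)) fun l => rfl, map_sum,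
    Finset.sum_range]
  refine Finset.sum_congr rfl fun i _ => ?_
  rw [map_smul, hface, D.homotopy_barChain ρ hq, Finset.smul_sum]
  exact Finset.sum_congr rfl fun j _ => by rw [smul_smul, ← pow_add]

theorem twistMap_sub_twistMap_zero (hbd : IsHochschildBoundary ι bd)
    (hq : ∀ a, q (ι a) = (Submodule.span k {(1 : A)}).mkQ a) (c : C) :
    twistMap ρ D.τ' (D.U * convMap ι D.F) D.V 0 c - twistMap ρ D.τ D.U (convMap ι D.F * D.V) 0 c =
      bd 0 ∘ₗ D.homotopy ρ 0 c :=
  hochschildChains_ext_barChain hq fun x e => by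
    simp [← D.bd_homotopy_barChain ρ hbd hq]

theorem twistMap_sub_twistMap_succ (hbd : IsHochschildBoundary ι bd)
    (hq : ∀ a, q (ι a) = (Submodule.span k {(1 : A)}).mkQ a) (r : ℕ) (c : C) :
    twistMap ρ D.τ' (D.U * convMap ι D.F) D.V (r + 1) c -
        twistMap ρ D.τ D.U (convMap ι D.F * D.V) (r + 1) c =
      bd (r + 1) ∘ₗ D.homotopy ρ (r + 1) c + D.homotopy ρ r c ∘ₗ bd r :=
  hochschildChains_ext_barChain hq fun x e => by
    rw [← D.bd_homotopy_barChain ρ hbd hq, ← D.homotopy_bd_barChain ρ hbd hq]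
    rfl

end TwistIntertwiner

end TwistMaps

noncomputable section CleftExtensions

open WithConv

/-- A cleft extension of `A` by the bialgebra `H`: an algebra `E` over `A` with a convolution
invertible `γ : H → E` which implements a measuring of `A` by `H` and is multiplicative up to
a cocycle with values in `A`. -/
structure CleftExtension {k A E : Type*} [CommRing k] [Ring A] [Algebra k A] [Ring E] [Algebra k E]
    (ι : A →ₐ[k] E) (H : Type*) [Ring H] [Bialgebra k H] where
  act : A →ₐ[k] WithConv (H →ₗ[k] A)
  cocycle : WithConv (H ⊗[k] H →ₗ[k] A)
  γ : (WithConv (H →ₗ[k] E))ˣ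
  γ_mul_const : ∀ a, (γ : WithConv (H →ₗ[k] E)) * convConst k E H (ι a) = convMap ι (act a) * γ
  γ_mul_γ_eq : convComap (coalgFst k H H) γ * convComap (coalgSnd k H H) γ =
    convMap ι cocycle * convComap (Bialgebra.mulCoalgHom k H) γ

namespace CleftExtension

variable {k A E H : Type*} [CommRing k] [Ring A] [Algebra k A] [Ring E] [Algebra k E]
  [Ring H] [Bialgebra k H] {ι : A →ₐ[k] E} (X : CleftExtension ι H)

/-- The map `h ⊗ l ↦ γ(h)γ(l)`. -/
def γProd : (WithConv (H ⊗[k] H →ₗ[k] E))ˣ :=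
  Units.map (convComap (A := E) (coalgFst k H H) : _ →* _) X.γ *
    Units.map (convComap (A := E) (coalgSnd k H H) : _ →* _) X.γ

/-- The map `h ⊗ l ↦ γ(hl)`. -/
def γMul : (WithConv (H ⊗[k] H →ₗ[k] E))ˣ :=
  Units.map (convComap (A := E) (Bialgebra.mulCoalgHom k H) : _ →* _) X.γ

lemma semiconjBy_convComap_γ {C : Type*} [AddCommMonoid C] [Module k C] [Coalgebra k C]
    (ψ : C →ₗc[k] H) (a : A) : SemiconjBy (convComap ψ X.γ.val) (convConst k E C (ι a))
      (convMap ι (convComap ψ (X.act a))) := by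
  have h := congr(convComap ψ $(X.γ_mul_const a))
  rwa [map_mul, map_mul, convComap_convConst] at h

lemma semiconjBy_γMul (a : A) : SemiconjBy X.γMul.val (convConst k E _ (ι a))
    (convMap ι (((convComap (Bialgebra.mulCoalgHom k H)).comp X.act) a)) :=
  X.semiconjBy_convComap_γ _ a

lemma semiconjBy_γProd (a : A) : SemiconjBy X.γProd.val (convConst k E _ (ι a))
    (convMap ι (measuringComp X.act X.act a)) := by
  have hfst : convComap (coalgFst k H H) X.γ * convComap (coalgSnd k H H) (convMap ι (X.act a)) =
      convMap ι (measuringComp X.act X.act a) * convComap (coalgFst k H H) X.γ := by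
    ext h l
    let r := Coalgebra.Repr.arbitrary k h
    have hγ := congr($(X.γ_mul_const (X.act a l)) h)
    rw [mul_convConst_apply, r.convMul_apply] at hγ
    simpa [convComap_coalgFst_mul_convComap_coalgSnd_apply, mul_convComap_coalgFst_apply r,
      -LinearMap.convMul_apply] using hγ
  exact SemiconjBy.mul_left hfst (X.semiconjBy_convComap_γ _ a)

lemma convMap_cocycle : convMap ι X.cocycle = (X.γProd * X.γMul⁻¹).val :=
  (Units.eq_mul_inv_iff_mul_eq _).2 X.γ_mul_γ_eq.symm

/-- The intertwiner between the actions `(a^l)^h` and `a^{hl}` given by the cocycle. -/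
def intertwiner : TwistIntertwiner ι (H ⊗[k] H) where
  τ := measuringComp X.act X.act
  τ' := (convComap (Bialgebra.mulCoalgHom k H)).comp X.act
  U := X.γProd⁻¹.val
  F := X.cocycle
  V := X.γMul.val
  const_mul_U a := (X.semiconjBy_γProd a).units_inv_symm_left.eq.symm
  τ_mul_F a := by
    rw [X.convMap_cocycle]
    exact ((X.semiconjBy_γProd a).mul_left (X.semiconjBy_γMul a).units_inv_symm_left).eq.symm
  V_mul_const a := (X.semiconjBy_γMul a).eq

variable {I : Type*} (ρ : ∀ h : H, Coalgebra.Repr k h I)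

/-- The chain endomorphism `ϑ^h`. -/
def theta (r : ℕ) (h : H) : HochschildChains k A E r →ₗ[k] HochschildChains k A E r :=
  twistMap ρ X.act X.γ⁻¹.val X.γ.val r h

variable {q : E →ₗ[k] ReducedModule k A}

lemma theta_comp_theta (hq : ∀ a, q (ι a) = (Submodule.span k {(1 : A)}).mkQ a) (r : ℕ) {J : Type*}
    (ρ' : ∀ t : H ⊗[k] H, Coalgebra.Repr k t J) (h l : H) :
    X.theta ρ r h ∘ₗ X.theta ρ r l =
      twistMap ρ' X.intertwiner.τ X.intertwiner.U
        (convMap ι X.intertwiner.F * X.intertwiner.V) r (h ⊗ₜ l) := by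
  rw [theta, theta, twistMap_comp ρ ρ hq (measuringComp_apply_tmul X.act X.act) _ _ _ _ r ρ',
    X.γ_mul_γ_eq]
  rfl

lemma theta_mul (hq : ∀ a, q (ι a) = (Submodule.span k {(1 : A)}).mkQ a) (r : ℕ) {J : Type*}
    (ρ' : ∀ t : H ⊗[k] H, Coalgebra.Repr k t J) (h l : H) :
    X.theta ρ r (h * l) =
      twistMap ρ' X.intertwiner.τ' (X.intertwiner.U * convMap ι X.intertwiner.F)
        X.intertwiner.V r (h ⊗ₜ l) := by
  have hU : X.intertwiner.U * convMap ι X.intertwiner.F = X.γMul⁻¹.val := by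
    rw [show X.intertwiner.F = X.cocycle from rfl, X.convMap_cocycle]
    exact congr(($(inv_mul_cancel_left X.γProd X.γMul⁻¹)).val)
  rw [hU]
  exact (twistMap_convComap ρ' ρ hq (Bialgebra.mulCoalgHom k H) X.act X.γ⁻¹.val X.γ.val r
    (h ⊗ₜ l)).symm

variable {bd : ∀ r, HochschildChains k A E (r + 1) →ₗ[k] HochschildChains k A E r}

theorem exists_theta_theta_sub_theta_mul_zero (hbd : IsHochschildBoundary ι bd)
    (hq : ∀ a, q (ι a) = (Submodule.span k {(1 : A)}).mkQ a) (h l : H)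
    (z : HochschildChains k A E 0) :
    ∃ w, X.theta ρ 0 h (X.theta ρ 0 l z) - X.theta ρ 0 (h * l) z = bd 0 w := by
  let ρ' (t : H ⊗[k] H) := Coalgebra.Repr.arbitrary k t
  have hs := X.intertwiner.twistMap_sub_twistMap_zero ρ' hbd hq (h ⊗ₜ l)
  rw [← X.theta_mul ρ hq 0 ρ', ← X.theta_comp_theta ρ hq 0 ρ'] at hs
  refine ⟨-X.intertwiner.homotopy ρ' 0 (h ⊗ₜ l) z, ?_⟩
  rw [map_neg, ← neg_sub]
  exact congr(-($hs z))

theorem exists_theta_theta_sub_theta_mul_succ (hbd : IsHochschildBoundary ι bd)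
    (hq : ∀ a, q (ι a) = (Submodule.span k {(1 : A)}).mkQ a) (h l : H) (r : ℕ)
    (z : HochschildChains k A E (r + 1)) (hz : bd r z = 0) :
    ∃ w, X.theta ρ (r + 1) h (X.theta ρ (r + 1) l z) - X.theta ρ (r + 1) (h * l) z =
      bd (r + 1) w := by
  let ρ' (t : H ⊗[k] H) := Coalgebra.Repr.arbitrary k t
  have hs := X.intertwiner.twistMap_sub_twistMap_succ ρ' hbd hq r (h ⊗ₜ l)
  rw [← X.theta_mul ρ hq (r + 1) ρ', ← X.theta_comp_theta ρ hq (r + 1) ρ'] at hs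
  refine ⟨-X.intertwiner.homotopy ρ' (r + 1) (h ⊗ₜ l) z, ?_⟩
  have hz' := congr($hs z)
  simp only [LinearMap.add_apply, LinearMap.comp_apply, hz, map_zero, add_zero] at hz'
  rw [map_neg, ← hz']
  exact (neg_sub _ _).symm

end CleftExtension

end CleftExtensions

noncomputable section Antipode

open WithConv

section Coopposite

variable {k C E : Type*} [CommSemiring k] [AddCommMonoid C] [Module k C] [Coalgebra k C]
  [Semiring E] [Algebra k E]

/-- The convolution product `c ↦ u(c⁽²⁾)v(c⁽¹⁾)` for the co-opposite coalgebra. -/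
def copMul (u v : WithConv (C →ₗ[k] E)) : WithConv (C →ₗ[k] E) :=
  toConv (LinearMap.mul' k E ∘ₗ TensorProduct.map u.ofConv v.ofConv ∘ₗ
    (TensorProduct.comm k C C).toLinearMap ∘ₗ Coalgebra.comul)

lemma copMul_apply {I : Type*} {c : C} (r : Coalgebra.Repr k c I) (u v : WithConv (C →ₗ[k] E)) :
    copMul u v c = ∑ i ∈ r.index, u (r.right i) * v (r.left i) := by
  simp [copMul, ← r.eq]

lemma mul_copMul_apply {I : Type*} {c : C} (r : Coalgebra.Repr k c I)
    (u v w : WithConv (C →ₗ[k] E)) :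
    (u * copMul v w) c = ∑ i ∈ r.index, (u * convConst k E C (v (r.right i)) * w) (r.left i) := by
  let r₁ (i : I) := Coalgebra.Repr.arbitrary k (r.left i)
  let r₂ (i : I) := Coalgebra.Repr.arbitrary k (r.right i)
  simp only [r.convMul_apply, (r₁ _).convMul_apply, copMul_apply (r₂ _), mul_convConst_apply,
    Finset.mul_sum]
  simpa [mul_assoc] using sum_sum_coassoc r r₁ r₂ (LinearMap.mul' k E ∘ₗ
    TensorProduct.map u.ofConv (LinearMap.mul' k E ∘ₗ TensorProduct.map v.ofConv w.ofConv ∘ₗ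
      (TensorProduct.comm k C C).toLinearMap))

end Coopposite

variable {k H E : Type*} [CommSemiring k] [Semiring H] [HopfAlgebra k H] [Semiring E] [Algebra k E]

lemma comul_antipode (h : H) : Coalgebra.comul (R := k) (HopfAlgebra.antipode k h) =
    TensorProduct.map (HopfAlgebra.antipode k) (HopfAlgebra.antipode k)
      (TensorProduct.comm k H H (Coalgebra.comul (R := k) h)) := by
  let δ : WithConv (H →ₗ[k] H ⊗[k] H) := toConv Coalgebra.comul
  let S : WithConv (H →ₗ[k] H) := toConv (HopfAlgebra.antipode k)
  let iL : WithConv (H →ₗ[k] H) →ₐ[k] WithConv (H →ₗ[k] H ⊗[k] H) :=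
    convMap Algebra.TensorProduct.includeLeft
  let iR : WithConv (H →ₗ[k] H) →ₐ[k] WithConv (H →ₗ[k] H ⊗[k] H) :=
    convMap Algebra.TensorProduct.includeRight
  have hS : S * toConv .id = 1 := LinearMap.antipode_mul_id
  have hδ : δ = iL (toConv .id) * iR (toConv .id) := by
    ext c
    let r := Coalgebra.Repr.arbitrary k c
    rw [r.convMul_apply]
    simp [δ, iL, iR, ← r.eq]
  have hinv : iR S * iL S * δ = 1 := by
    rw [hδ, mul_assoc, ← mul_assoc (iL S), ← map_mul, hS, map_one, one_mul, ← map_mul, hS, map_one]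
  have h' := congr($(left_inv_eq_right_inv hinv LinearMap.comul_right_inv) h)
  let r := Coalgebra.Repr.arbitrary k h
  rw [r.convMul_apply] at h'
  simpa [iL, iR, S, ← r.eq] using h'.symm

/-- The map `h ↦ W(S(h⁽¹⁾) ⊗ h⁽²⁾)`. -/
def antipodeFst (W : WithConv (H ⊗[k] H →ₗ[k] E)) : WithConv (H →ₗ[k] E) :=
  toConv (W.ofConv ∘ₗ (HopfAlgebra.antipode k).rTensor H ∘ₗ Coalgebra.comul)

/-- The map `h ↦ W(h⁽¹⁾ ⊗ S(h⁽²⁾))`. -/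
def antipodeSnd (W : WithConv (H ⊗[k] H →ₗ[k] E)) : WithConv (H →ₗ[k] E) :=
  toConv (W.ofConv ∘ₗ (HopfAlgebra.antipode k).lTensor H ∘ₗ Coalgebra.comul)

/-- The map `h ↦ v(S(h))`. -/
def compAntipode (v : WithConv (H →ₗ[k] E)) : WithConv (H →ₗ[k] E) :=
  toConv (v.ofConv ∘ₗ HopfAlgebra.antipode k)

lemma compAntipode_apply (v : WithConv (H →ₗ[k] E)) (h : H) :
    compAntipode v h = v (HopfAlgebra.antipode k h) := rfl

variable {I : Type*} {h : H}

lemma antipodeFst_apply (r : Coalgebra.Repr k h I) (W : WithConv (H ⊗[k] H →ₗ[k] E)) :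
    antipodeFst W h = ∑ i ∈ r.index, W (HopfAlgebra.antipode k (r.left i) ⊗ₜ r.right i) := by
  simp [antipodeFst, ← r.eq]

lemma antipodeSnd_apply (r : Coalgebra.Repr k h I) (W : WithConv (H ⊗[k] H →ₗ[k] E)) :
    antipodeSnd W h = ∑ i ∈ r.index, W (r.left i ⊗ₜ HopfAlgebra.antipode k (r.right i)) := by
  simp [antipodeSnd, ← r.eq]

lemma antipodeFst_mul (W : WithConv (H ⊗[k] H →ₗ[k] E)) (v : WithConv (H →ₗ[k] E)) :
    antipodeFst W * v = antipodeFst (W * convComap (coalgSnd k H H) v) := by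
  ext h
  let r := Coalgebra.Repr.arbitrary k h
  let r₁ i := Coalgebra.Repr.arbitrary k (r.left i)
  let r₂ i := Coalgebra.Repr.arbitrary k (r.right i)
  simp only [r.convMul_apply, antipodeFst_apply r, antipodeFst_apply (r₁ _),
    mul_convComap_coalgSnd_apply _ (r₂ _), Finset.sum_mul]
  exact (sum_sum_coassoc r r₁ r₂ (LinearMap.mul' k E ∘ₗ
    TensorProduct.map (W.ofConv ∘ₗ (HopfAlgebra.antipode k).rTensor H) v.ofConv ∘ₗ
      (TensorProduct.assoc k H H H).symm.toLinearMap)).symm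

lemma antipodeFst_convComap_mul (v : WithConv (H →ₗ[k] E)) :
    antipodeFst (convComap (Bialgebra.mulCoalgHom k H) v) = convConst k E H (v 1) := by
  ext h
  let r := Coalgebra.Repr.arbitrary k h
  rw [antipodeFst_apply r]
  simpa [convConst, ← map_sum, HopfAlgebra.sum_antipode_mul_eq_smul] using
    (Algebra.smul_def _ _).trans (Algebra.commutes _ _)

/-- The representation of `Δ(S(h))` given by `S(h⁽²⁾) ⊗ S(h⁽¹⁾)`. -/
def antipodeRepr (r : Coalgebra.Repr k h I) :
    Coalgebra.Repr k (HopfAlgebra.antipode k h) I where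
  index := r.index
  left i := HopfAlgebra.antipode k (r.right i)
  right i := HopfAlgebra.antipode k (r.left i)
  eq := by simp [comul_antipode, ← r.eq]

lemma antipodeFst_mul_convComap_coalgFst (W : WithConv (H ⊗[k] H →ₗ[k] E))
    (v : WithConv (H →ₗ[k] E)) :
    antipodeFst (W * convComap (coalgFst k H H) v) =
      copMul (antipodeFst W) (compAntipode v) := by
  ext h
  let r := Coalgebra.Repr.arbitrary k h
  let r₁ i := Coalgebra.Repr.arbitrary k (r.left i)
  let r₂ i := Coalgebra.Repr.arbitrary k (r.right i)
  simp only [antipodeFst_apply r, mul_convComap_coalgFst_apply (antipodeRepr (r₁ _)),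
    copMul_apply r, antipodeFst_apply (r₂ _), antipodeRepr, compAntipode_apply, Finset.sum_mul]
  exact (sum_sum_coassoc r r₁ r₂ (LinearMap.mul' k E ∘ₗ (TensorProduct.comm k E E).toLinearMap ∘ₗ
    TensorProduct.map (compAntipode v).ofConv
      (W.ofConv ∘ₗ (HopfAlgebra.antipode k).rTensor H))).symm

lemma antipodeSnd_mul (u v : WithConv (H →ₗ[k] E)) :
    antipodeSnd (convComap (coalgFst k H H) u * convComap (coalgSnd k H H) v) =
      u * compAntipode v := by
  ext h
  let r := Coalgebra.Repr.arbitrary k h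
  simp only [antipodeSnd_apply r, r.convMul_apply, compAntipode_apply,
    convComap_coalgFst_mul_convComap_coalgSnd_apply]

lemma sum_mul_apply_mul_antipode {J : Type*} (r : Coalgebra.Repr k h I)
    (r₁ : ∀ i, Coalgebra.Repr k (r.left i) J) (w v : WithConv (H →ₗ[k] E)) :
    ∑ i ∈ r.index, ∑ j ∈ (r₁ i).index,
      w ((r₁ i).left j) * v ((r₁ i).right j * HopfAlgebra.antipode k (r.right i)) = w h * v 1 := by
  let r₂ i := Coalgebra.Repr.arbitrary k (r.right i)
  have hassoc := sum_sum_coassoc r r₁ r₂ (LinearMap.mul' k E ∘ₗ TensorProduct.map w.ofConv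
    (v.ofConv ∘ₗ LinearMap.mul' k H ∘ₗ (HopfAlgebra.antipode k).lTensor H))
  have hS (i) := HopfAlgebra.sum_mul_antipode_eq_smul (r₂ i)
  refine hassoc.symm.trans ?_
  simp only [LinearMap.comp_apply, TensorProduct.map_tmul, LinearMap.lTensor_tmul,
    LinearMap.mul'_apply, ← map_sum, ← Finset.mul_sum, hS, map_smul, mul_smul_comm]
  rw [← Finset.sum_congr rfl fun i _ => smul_mul_assoc .., ← Finset.sum_mul]
  simp only [← map_smul, ← map_sum, sum_counit_smul_left]

lemma antipodeSnd_mul_convComap_mul (W : WithConv (H ⊗[k] H →ₗ[k] E))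
    (v : WithConv (H →ₗ[k] E)) :
    antipodeSnd (W * convComap (Bialgebra.mulCoalgHom k H) v) =
      antipodeSnd W * convConst k E H (v 1) := by
  ext h
  let r := Coalgebra.Repr.arbitrary k h
  let r₁ i := Coalgebra.Repr.arbitrary k (r.left i)
  let r₂ i := Coalgebra.Repr.arbitrary k (r.right i)
  let r₁₁ i j := Coalgebra.Repr.arbitrary k ((r₁ i).left j)
  let w : H →ₗ[k] WithConv (H →ₗ[k] E) := (WithConv.linearEquiv k _).symm.toLinearMap ∘ₗ
    (TensorProduct.curry W.ofConv).flip ∘ₗ HopfAlgebra.antipode k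
  let v' : H →ₗ[k] WithConv (H →ₗ[k] E) := (WithConv.linearEquiv k _).symm.toLinearMap ∘ₗ
    ((LinearMap.mul k H).flip.compr₂ v.ofConv) ∘ₗ HopfAlgebra.antipode k
  have hassoc := sum_sum_coassoc r r₁ r₂ (TensorProduct.lift
    (TensorProduct.lift (((LinearMap.mul k _).compl₁₂ w v').flip.compr₂
      (WithConv.linearEquiv k _).toLinearMap)).flip)
  calc
    _ = ∑ i ∈ r.index, ∑ j ∈ (r₂ i).index,
          (w ((r₂ i).right j) * v' ((r₂ i).left j)) (r.left i) := by
      simp only [antipodeSnd_apply r, convMul_apply_tmul (r₁ _) (antipodeRepr (r₂ _)),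
        antipodeRepr, convComap_apply, (r₁ _).convMul_apply]
      exact Finset.sum_congr rfl fun i _ => Finset.sum_comm
    _ = ∑ i ∈ r.index, ∑ j ∈ (r₁ i).index,
          (w (r.right i) * v' ((r₁ i).right j)) ((r₁ i).left j) := hassoc
    _ = ∑ i ∈ r.index, w (r.right i) (r.left i) * v 1 := by
      simp only [(r₁₁ _ _).convMul_apply]
      exact Finset.sum_congr rfl fun i _ =>
        sum_mul_apply_mul_antipode (r₁ i) (r₁₁ i) (w (r.right i)) v
    _ = _ := by
      rw [mul_convConst_apply, antipodeSnd_apply r, Finset.sum_mul]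
      rfl

variable {A : Type*} [Semiring A] [Algebra k A] {ι : A →ₐ[k] E} {γ : WithConv (H →ₗ[k] E)}
  {f f' : WithConv (H ⊗[k] H →ₗ[k] A)}

/-- The map `h ↦ f'(S(h⁽²⁾), h⁽³⁾)γ(S(h⁽¹⁾))`, an inverse of `γ` if `f'` is one of the cocycle. -/
def cleavingInv (ι : A →ₐ[k] E) (f' : WithConv (H ⊗[k] H →ₗ[k] A)) (γ : WithConv (H →ₗ[k] E)) :
    WithConv (H →ₗ[k] E) :=
  copMul (convMap ι (antipodeFst f')) (compAntipode γ)

lemma cleavingInv_mul (hγ_one : γ 1 = 1)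
    (hγ : convComap (coalgFst k H H) γ * convComap (coalgSnd k H H) γ =
      convMap ι f * convComap (Bialgebra.mulCoalgHom k H) γ)
    (hf : f' * f = 1) : cleavingInv ι f' γ * γ = 1 :=
  calc
    cleavingInv ι f' γ * γ = antipodeFst (convMap ι f' * convComap (coalgFst k H H) γ) * γ := by
      rw [antipodeFst_mul_convComap_coalgFst]
      rfl
    _ = antipodeFst (convComap (Bialgebra.mulCoalgHom k H) γ) := by
      rw [antipodeFst_mul, mul_assoc, hγ, ← mul_assoc, ← map_mul, hf, map_one, one_mul]
    _ = 1 := by rw [antipodeFst_convComap_mul, hγ_one, map_one]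

lemma mul_cleavingInv_mem_range {act : A → WithConv (H →ₗ[k] A)} (hγ_one : γ 1 = 1)
    (hconst : ∀ a, γ * convConst k E H (ι a) = convMap ι (act a) * γ)
    (hγ : convComap (coalgFst k H H) γ * convComap (coalgSnd k H H) γ =
      convMap ι f * convComap (Bialgebra.mulCoalgHom k H) γ) (h : H) :
    ∃ a, ι a = (γ * cleavingInv ι f' γ) h := by
  have hS : γ * compAntipode γ = convMap ι (antipodeSnd f) := by
    rw [← antipodeSnd_mul, hγ, antipodeSnd_mul_convComap_mul, hγ_one, map_one, mul_one]
    rfl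
  have hconj (a : A) : γ * convConst k E H (ι a) * compAntipode γ =
      convMap ι (act a * antipodeSnd f) := by
    rw [hconst, mul_assoc, hS, map_mul]
  let r := Coalgebra.Repr.arbitrary k h
  refine ⟨∑ i ∈ r.index, (act (antipodeFst f' (r.right i)) * antipodeSnd f) (r.left i), ?_⟩
  rw [cleavingInv, mul_copMul_apply r, map_sum]
  exact Finset.sum_congr rfl fun i _ => congr($(hconj _) (r.left i)).symm

-- The left inverse is also a right one because `u ↦ (ι ∘ u) * γ` is injective on `Hom(H, A)`.
lemma mul_eq_one_of_mem_range {γ' : WithConv (H →ₗ[k] E)} {p : E →ₗ[k] A}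
    (hp : ∀ a h, p (ι a * γ h) = Coalgebra.counit (R := k) h • a) (hγ_one : γ 1 = 1)
    (hleft : γ' * γ = 1) (hrange : ∀ h, ∃ a, ι a = (γ * γ') h) : γ * γ' = 1 := by
  let e : WithConv (H →ₗ[k] A) := toConv (p ∘ₗ (γ * γ').ofConv)
  have hpι (a : A) : p (ι a) = a := by simpa [hγ_one] using hp a 1
  have hιe : convMap ι e = γ * γ' := by
    ext h
    obtain ⟨a, ha⟩ := hrange h
    simp [e, ← ha, hpι, -LinearMap.convMul_apply]
  have hp_mul (u : WithConv (H →ₗ[k] A)) (h : H) : p ((convMap ι u * γ) h) = u h := by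
    let r := Coalgebra.Repr.arbitrary k h
    rw [r.convMul_apply, map_sum]
    simp only [convMap_apply, hp, ← map_smul, ← map_sum, sum_counit_smul_left]
  have he : e = 1 := by
    ext h
    rw [← hp_mul, hιe, mul_assoc, hleft, mul_one, ← hp_mul, map_one, one_mul]
  rw [← hιe, he, map_one]

end Antipode

noncomputable section CrossedSystems

open WithConv

section ThreefoldTensor

variable (k H : Type*) [CommRing k] [Ring H] [Bialgebra k H]

/-- The coalgebra map `h ⊗ l ⊗ m ↦ ε(m) h ⊗ l`. -/
def dropRight : H ⊗[k] (H ⊗[k] H) →ₗc[k] H ⊗[k] H :=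
  (coalgFst k (H ⊗[k] H) H).comp (Coalgebra.TensorProduct.assoc k k H H H).symm.toCoalgHom

/-- The coalgebra map `h ⊗ l ⊗ m ↦ h ⊗ lm`. -/
def mulRight : H ⊗[k] (H ⊗[k] H) →ₗc[k] H ⊗[k] H :=
  Coalgebra.TensorProduct.map (.id k H) (Bialgebra.mulCoalgHom k H)

/-- The coalgebra map `h ⊗ l ⊗ m ↦ hl ⊗ m`. -/
def mulLeft : H ⊗[k] (H ⊗[k] H) →ₗc[k] H ⊗[k] H :=
  (Coalgebra.TensorProduct.map (Bialgebra.mulCoalgHom k H) (.id k H)).comp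
    (Coalgebra.TensorProduct.assoc k k H H H).symm.toCoalgHom

variable {k H}

@[simp]
lemma dropRight_tmul (h l m : H) :
    dropRight k H (h ⊗ₜ (l ⊗ₜ m)) = Coalgebra.counit (R := k) m • (h ⊗ₜ l) := rfl

@[simp]
lemma mulRight_tmul (h l m : H) : mulRight k H (h ⊗ₜ (l ⊗ₜ m)) = h ⊗ₜ (l * m) := rfl

@[simp]
lemma mulLeft_tmul (h l m : H) : mulLeft k H (h ⊗ₜ (l ⊗ₜ m)) = (h * l) ⊗ₜ m := rfl

variable {A : Type*} [Ring A] [Algebra k A]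

lemma convMeasure_mul_convComap_mulRight_apply {I J K : Type*} {h l m : H}
    (r : Coalgebra.Repr k h I) (s : Coalgebra.Repr k l J) (t : Coalgebra.Repr k m K)
    (σ : A →ₐ[k] WithConv (H →ₗ[k] A)) (u v : WithConv (H ⊗[k] H →ₗ[k] A)) :
    (convMeasure σ u * convComap (mulRight k H) v) (h ⊗ₜ (l ⊗ₜ m)) =
      ∑ i ∈ r.index, ∑ j ∈ s.index, ∑ p ∈ t.index,
        σ (u (s.left j ⊗ₜ t.left p)) (r.left i) *
          v (r.right i ⊗ₜ (s.right j * t.right p)) :=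
  convMul_apply_tmul_tmul r s t _ _

lemma convComap_dropRight_mul_convComap_mulLeft_apply {I J : Type*} {h l : H}
    (r : Coalgebra.Repr k h I) (s : Coalgebra.Repr k l J) (u v : WithConv (H ⊗[k] H →ₗ[k] A))
    (m : H) :
    (convComap (dropRight k H) u * convComap (mulLeft k H) v) (h ⊗ₜ (l ⊗ₜ m)) =
      ∑ i ∈ r.index, ∑ j ∈ s.index,
        u (r.left i ⊗ₜ s.left j) * v ((r.right i * s.right j) ⊗ₜ m) := by
  let t := Coalgebra.Repr.arbitrary k m
  rw [convMul_apply_tmul_tmul r s t]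
  refine Finset.sum_congr rfl fun i _ => Finset.sum_congr rfl fun j _ => ?_
  conv_rhs => rw [← Coalgebra.sum_counit_smul t]
  simp [TensorProduct.tmul_sum, Finset.mul_sum]

end ThreefoldTensor

section Conditions

variable (k A H : Type*) [CommRing k] [Ring A] [Algebra k A] [Ring H] [Bialgebra k H]

/-- The data of a crossed product `A #_f H`: a measuring of `A` by `H` with `a^1 = a` and a normal
cocycle `f` satisfying the twisted module condition, the conditions being written as
identities in convolution algebras. -/
structure CrossedSystem where
  act : A →ₐ[k] WithConv (H →ₗ[k] A)
  cocycle : WithConv (H ⊗[k] H →ₗ[k] A)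
  act_one_right : ∀ a, act a 1 = a
  cocycle_one_right : ∀ h, cocycle (h ⊗ₜ 1) = Coalgebra.counit (R := k) h • 1
  cocycle_one_left : ∀ h, cocycle (1 ⊗ₜ h) = Coalgebra.counit (R := k) h • 1
  cocycle_mul : convMeasure act cocycle * convComap (mulRight k H) cocycle =
    convComap (dropRight k H) cocycle * convComap (mulLeft k H) cocycle
  twisted : ∀ a, convMeasure act (act a) * cocycle =
    cocycle * convComap (Bialgebra.mulCoalgHom k H) (act a)

namespace CrossedSystem

variable {k A H} (X : CrossedSystem k A H)

/-- The bilinear form `(h, a) ↦ a^h` of the action. -/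
def actHom : H →ₗ[k] A →ₗ[k] A :=
  ((WithConv.linearEquiv k _).toLinearMap ∘ₗ X.act.toLinearMap).flip

@[simp]
lemma actHom_apply (h : H) (a : A) : X.actHom h a = X.act a h := rfl

end CrossedSystem

end Conditions

section Product

open Algebra.TensorProduct

variable {k A H : Type*} [CommRing k] [Ring A] [Algebra k A] [Ring H] [HopfAlgebra k H]

/-- The representation `1 ⊗ 1` of `Δ(1)`. -/
@[simps]
def oneRepr (k H : Type*) [CommSemiring k] [Semiring H] [Bialgebra k H] :
    Coalgebra.Repr k (1 : H) Unit where
  index := {()}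
  left _ := 1
  right _ := 1
  eq := by simp [Algebra.TensorProduct.one_def]

lemma gammaInv_apply {I J : Type*} {h : H} (r : Coalgebra.Repr k h I)
    (r₂ : ∀ i, Coalgebra.Repr k (r.right i) J) (f : H →ₗ[k] H →ₗ[k] A) :
    gammaInv k A H f h = ∑ i ∈ r.index,
      (∑ j ∈ (r₂ i).index, f (HopfAlgebra.antipode k ((r₂ i).left j)) ((r₂ i).right j)) ⊗ₜ
        HopfAlgebra.antipode k (r.left i) := by
  simp only [gammaInv, LinearMap.comp_apply, ← r.eq, map_sum, LinearMap.lTensor_tmul,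
    TensorProduct.tmul_sum, ← (r₂ _).eq]
  simp [TensorProduct.sum_tmul]

namespace CrossedSystem

variable (X : CrossedSystem k A H)

/-- The multiplication of the crossed product. -/
def mulHom : A ⊗[k] H →ₗ[k] A ⊗[k] H →ₗ[k] A ⊗[k] H :=
  crossedMul k A H X.actHom (TensorProduct.curry X.cocycle.ofConv)

/-- The map `h ⊗ l ↦ γ(h)γ(l) = f(h⁽¹⁾, l⁽¹⁾) # h⁽²⁾l⁽²⁾`. The convolution product refers to the
tensor product of the algebras `A` and `H`. -/
def gamProd : WithConv (H ⊗[k] H →ₗ[k] A ⊗[k] H) :=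
  convMap includeLeft X.cocycle * convComap (Bialgebra.mulCoalgHom k H) (toConv (gam k A H))

/-- The map `h ⊗ l ↦ γ(h)(b # l)`. -/
def gamMul (b : A) : WithConv (H ⊗[k] H →ₗ[k] A ⊗[k] H) :=
  convMap includeLeft (convComap (coalgFst k H H) (X.act b)) * X.gamProd

lemma gamMul_apply {I : Type*} {h : H} (r : Coalgebra.Repr k h I) (b : A) (l : H) :
    X.gamMul b (h ⊗ₜ l) =
      ∑ i ∈ r.index, (X.act b (r.left i) ⊗ₜ 1) * X.gamProd (r.right i ⊗ₜ l) :=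
  convComap_coalgFst_mul_apply r (convMap includeLeft (X.act b)) X.gamProd l

lemma mulHom_tmul (a b : A) (h l : H) :
    X.mulHom (a ⊗ₜ h) (b ⊗ₜ l) = (a ⊗ₜ 1) * X.gamMul b (h ⊗ₜ l) := by
  let r := Coalgebra.Repr.arbitrary k h
  let r₁ i := Coalgebra.Repr.arbitrary k (r.left i)
  let s := Coalgebra.Repr.arbitrary k l
  rw [gamMul, gamProd, ← mul_assoc, ← map_mul, convMul_apply_tmul r s]
  simp only [convMap_apply, convComap_coalgFst_mul_apply (r₁ _)]
  simpa [mulHom, crossedMul, gam, ← r.eq, ← s.eq, ← (r₁ _).eq, TensorProduct.sum_tmul,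
    TensorProduct.tmul_sum, Finset.mul_sum, Finset.sum_mul] using Finset.sum_comm

lemma mulHom_tmul_one_mul (a : A) (x y : A ⊗[k] H) :
    X.mulHom ((a ⊗ₜ 1) * x) y = (a ⊗ₜ 1) * X.mulHom x y := by
  induction x using TensorProduct.induction_on with
  | zero => simp
  | add x x' hx hx' => simp only [mul_add, map_add, LinearMap.add_apply, hx, hx']
  | tmul b h =>
    induction y using TensorProduct.induction_on with
    | zero => simp
    | add y y' hy hy' => simp only [mul_add, map_add, hy, hy']
    | tmul c l => simp [mulHom_tmul, ← mul_assoc]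

variable {D : Type*} [AddCommMonoid D] [Module k D] [Coalgebra k D]

lemma mulHom_one_tmul_conv_apply (h : H) (u : WithConv (D →ₗ[k] A)) (ψ : D →ₗc[k] H) (d : D) :
    X.mulHom (1 ⊗ₜ h)
        ((convMap (B := A ⊗[k] H) includeLeft u * convComap ψ (toConv (gam k A H))) d) =
      (convMap (B := A ⊗[k] H) includeLeft (convMeasure X.act u) *
        convComap (Coalgebra.TensorProduct.map (.id k H) ψ) X.gamProd) (h ⊗ₜ d) := by
  let r := Coalgebra.Repr.arbitrary k h
  let s := Coalgebra.Repr.arbitrary k d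
  rw [s.convMul_apply, map_sum, convMul_apply_tmul r s, Finset.sum_comm]
  refine Finset.sum_congr rfl fun j _ => ?_
  simp [gam, mulHom_tmul, gamMul_apply X r, ← Algebra.TensorProduct.one_def]

lemma mulHom_conv_apply_tmul (u : WithConv (D →ₗ[k] A)) (ψ : D →ₗc[k] H) (d : D) (c : A) (m : H) :
    X.mulHom ((convMap (B := A ⊗[k] H) includeLeft u * convComap ψ (toConv (gam k A H))) d)
        (c ⊗ₜ m) =
      (convMap (B := A ⊗[k] H) includeLeft (convComap (coalgFst k D H) u) *
        convComap (Coalgebra.TensorProduct.map ψ (.id k H)) (X.gamMul c)) (d ⊗ₜ m) := by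
  let s := Coalgebra.Repr.arbitrary k d
  have h := convComap_coalgFst_mul_apply s (convMap (B := A ⊗[k] H) includeLeft u)
    (convComap (Coalgebra.TensorProduct.map ψ (.id k H)) (X.gamMul c)) m
  rw [s.convMul_apply, map_sum, LinearMap.sum_apply]
  refine Eq.trans ?_ h.symm
  refine Finset.sum_congr rfl fun j _ => ?_
  simp [gam, mulHom_tmul]

lemma cocycle_assoc (b c : A) :
    convMeasure X.act (convConst k A _ b * (convComap (coalgFst k H H) (X.act c) * X.cocycle)) *
        convComap (mulRight k H) X.cocycle =
      convComap (dropRight k H) (convComap (coalgFst k H H) (X.act b) * X.cocycle) *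
        convComap (mulLeft k H) (convComap (coalgFst k H H) (X.act c) * X.cocycle) := by
  have hfst : (coalgFst k H H).comp (dropRight k H) = coalgFst k H (H ⊗[k] H) :=
    coalgHom_ext_threefold fun h l m => by simp [dropRight, mul_comm, smul_smul]
  have hmul : (coalgFst k H H).comp (mulLeft k H) =
      (Bialgebra.mulCoalgHom k H).comp (dropRight k H) :=
    coalgHom_ext_threefold fun h l m => by simp [dropRight, mulLeft]
  have hdrop : Coalgebra.TensorProduct.map (.id k H) (coalgFst k H H) = dropRight k H :=
    coalgHom_ext_threefold fun h l m => by simp [dropRight, TensorProduct.tmul_smul]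
  have htwisted := congr(convComap (dropRight k H) $(X.twisted c))
  simp only [map_mul, convComap_convComap] at htwisted
  simp only [map_mul, convMeasure_convConst, convMeasure_convComap, convComap_convComap, hfst,
    hmul, hdrop]
  calc
    _ = convComap (coalgFst k H (H ⊗[k] H)) (X.act b) *
          convComap (dropRight k H) (convMeasure X.act (X.act c)) *
          (convMeasure X.act X.cocycle * convComap (mulRight k H) X.cocycle) := by
      simp only [mul_assoc]
    _ = convComap (coalgFst k H (H ⊗[k] H)) (X.act b) *
          (convComap (dropRight k H) (convMeasure X.act (X.act c)) *
            convComap (dropRight k H) X.cocycle) * convComap (mulLeft k H) X.cocycle := by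
      simp only [X.cocycle_mul, mul_assoc]
    _ = _ := by
      simp only [htwisted, mul_assoc]

lemma gamMul_assoc (b c : A) :
    convMap includeLeft (convMeasure X.act (convConst k A _ b *
        (convComap (coalgFst k H H) (X.act c) * X.cocycle))) *
      convComap (mulRight k H) X.gamProd =
    convMap includeLeft (convComap (dropRight k H)
        (convComap (coalgFst k H H) (X.act b) * X.cocycle)) *
      convComap (mulLeft k H) (X.gamMul c) := by
  have hmul : (Bialgebra.mulCoalgHom k H).comp (mulRight k H) =
      (Bialgebra.mulCoalgHom k H).comp (mulLeft k H) :=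
    coalgHom_ext_threefold fun h l m => by simp [mulRight, mulLeft, mul_assoc]
  have hco (ψ : H ⊗[k] (H ⊗[k] H) →ₗc[k] H ⊗[k] H) (u : WithConv (H ⊗[k] H →ₗ[k] A)) :
      convComap ψ (convMap (B := A ⊗[k] H) includeLeft u) = convMap includeLeft (convComap ψ u) :=
    rfl
  rw [gamMul, gamProd, ← mul_assoc (convMap _ _) (convMap _ _), ← map_mul]
  simp only [map_mul (convComap (A := A ⊗[k] H) _), hco,
    ← mul_assoc (G := WithConv (_ →ₗ[k] A ⊗[k] H))]
  rw [← map_mul, ← map_mul, cocycle_assoc, convComap_convComap, convComap_convComap, hmul]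

lemma mulHom_assoc_tmul (a b c : A) (h l m : H) :
    X.mulHom (X.mulHom (a ⊗ₜ h) (b ⊗ₜ l)) (c ⊗ₜ m) =
      X.mulHom (a ⊗ₜ h) (X.mulHom (b ⊗ₜ l) (c ⊗ₜ m)) := by
  have ha : (a ⊗ₜ h : A ⊗[k] H) = (a ⊗ₜ 1) * (1 ⊗ₜ h) := by simp
  rw [ha]
  simp only [mulHom_tmul_one_mul]
  congr 1
  have hl : X.mulHom (1 ⊗ₜ h) (b ⊗ₜ l) =
      (convMap (B := A ⊗[k] H) includeLeft (convComap (coalgFst k H H) (X.act b) * X.cocycle) *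
        convComap (Bialgebra.mulCoalgHom k H) (toConv (gam k A H))) (h ⊗ₜ l) := by
    rw [mulHom_tmul, ← Algebra.TensorProduct.one_def, one_mul, gamMul, gamProd, ← mul_assoc,
      map_mul]
  have hr : X.mulHom (b ⊗ₜ l) (c ⊗ₜ m) =
      (convMap (B := A ⊗[k] H) includeLeft (convConst k A (H ⊗[k] H) b *
          (convComap (coalgFst k H H) (X.act c) * X.cocycle)) *
        convComap (Bialgebra.mulCoalgHom k H) (toConv (gam k A H))) (l ⊗ₜ m) := by
    rw [mulHom_tmul, gamMul, gamProd, map_mul, map_mul, mul_assoc, mul_assoc, convMap_convConst,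
      convConst_mul_apply]
    rfl
  rw [hl, hr, mulHom_conv_apply_tmul, mulHom_one_tmul_conv_apply]
  exact (convMul_apply_tmul_assoc _ _ h l m).trans
    congr($((X.gamMul_assoc b c).symm) (h ⊗ₜ (l ⊗ₜ m)))

lemma gamProd_apply {I J : Type*} {h l : H} (r : Coalgebra.Repr k h I)
    (s : Coalgebra.Repr k l J) :
    X.gamProd (h ⊗ₜ l) = ∑ i ∈ r.index, ∑ j ∈ s.index,
      X.cocycle (r.left i ⊗ₜ s.left j) ⊗ₜ (r.right i * s.right j) := by
  rw [gamProd, convMul_apply_tmul r s]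
  simp [gam]

lemma gamProd_one_left (l : H) : X.gamProd (1 ⊗ₜ l) = 1 ⊗ₜ l := by
  let s := Coalgebra.Repr.arbitrary k l
  rw [X.gamProd_apply (oneRepr k H) s]
  simp only [oneRepr, X.cocycle_one_left, TensorProduct.smul_tmul, one_mul,
    Finset.sum_singleton, ← TensorProduct.tmul_sum, Coalgebra.sum_counit_smul]

lemma gamProd_one_right (h : H) : X.gamProd (h ⊗ₜ 1) = 1 ⊗ₜ h := by
  let r := Coalgebra.Repr.arbitrary k h
  rw [X.gamProd_apply r (oneRepr k H)]
  simp only [oneRepr, X.cocycle_one_right, TensorProduct.smul_tmul, mul_one,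
    Finset.sum_singleton, ← TensorProduct.tmul_sum, Coalgebra.sum_counit_smul]

lemma gamMul_one_left (b : A) (l : H) : X.gamMul b (1 ⊗ₜ l) = b ⊗ₜ l := by
  simp [X.gamMul_apply (oneRepr k H), gamProd_one_left, X.act_one_right]

lemma gamMul_one (h l : H) : X.gamMul 1 (h ⊗ₜ l) = X.gamProd (h ⊗ₜ l) := by
  simp [gamMul, -LinearMap.convMul_apply]

lemma mulHom_one_left (x : A ⊗[k] H) : X.mulHom (1 ⊗ₜ 1) x = x := by
  induction x using TensorProduct.induction_on with
  | zero => simp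
  | add x y hx hy => rw [map_add, hx, hy]
  | tmul b l => simp [mulHom_tmul, gamMul_one_left]

lemma mulHom_one_right (x : A ⊗[k] H) : X.mulHom x (1 ⊗ₜ 1) = x := by
  induction x using TensorProduct.induction_on with
  | zero => simp
  | add x y hx hy => rw [map_add, LinearMap.add_apply, hx, hy]
  | tmul b l => simp [mulHom_tmul, gamMul_one, gamProd_one_right]

lemma mulHom_assoc (x y z : A ⊗[k] H) :
    X.mulHom (X.mulHom x y) z = X.mulHom x (X.mulHom y z) := by
  induction x using TensorProduct.induction_on with
  | zero => simp
  | add x x' hx hx' => simp only [map_add, LinearMap.add_apply, hx, hx']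
  | tmul a h =>
    induction y using TensorProduct.induction_on with
    | zero => simp
    | add y y' hy hy' => simp only [map_add, LinearMap.add_apply, hy, hy']
    | tmul b l =>
      induction z using TensorProduct.induction_on with
      | zero => simp
      | add z z' hz hz' => simp only [map_add, hz, hz']
      | tmul c m => exact X.mulHom_assoc_tmul a b c h l m

/-- The crossed product `A #_f H`, as a type synonym of `A ⊗ H` carrying the crossed
multiplication. -/
def Product (_X : CrossedSystem k A H) : Type _ := A ⊗[k] H

instance : AddCommGroup X.Product := inferInstanceAs (AddCommGroup (A ⊗[k] H))

instance : Module k X.Product := inferInstanceAs (Module k (A ⊗[k] H))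

instance : Ring X.Product where
  mul x y := X.mulHom x y
  one := (1 ⊗ₜ 1 : A ⊗[k] H)
  left_distrib x y z := map_add (X.mulHom x) y z
  right_distrib x y z := LinearMap.map_add₂ X.mulHom x y z
  zero_mul x := LinearMap.map_zero₂ X.mulHom x
  mul_zero x := map_zero (X.mulHom x)
  mul_assoc := X.mulHom_assoc
  one_mul := X.mulHom_one_left
  mul_one := X.mulHom_one_right
  zsmul := zsmulRec
  neg_add_cancel := neg_add_cancel

instance : Algebra k X.Product :=
  Algebra.ofModule (fun t x y => LinearMap.map_smul₂ X.mulHom t x y)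
    fun t x y => map_smul (X.mulHom x) t y

/-- The embedding `a ↦ a # 1` of `A` in the crossed product. -/
def ι : A →ₐ[k] X.Product :=
  AlgHom.ofLinearMap ((TensorProduct.mk k A H).flip 1) rfl fun a b =>
    ((X.mulHom_tmul a b 1 1).trans (by rw [gamMul_one_left, tmul_mul_tmul, one_mul]; rfl)).symm

/-- The map `h ↦ 1 # h`. -/
def γ : WithConv (H →ₗ[k] X.Product) := toConv (gam k A H)

lemma ι_mul_γ (a : A) (h : H) : X.ι a * X.γ h = (a ⊗ₜ h : A ⊗[k] H) :=
  (X.mulHom_tmul a 1 1 h).trans (by simp [gamMul_one_left])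

lemma γ_mul_γ (h l : H) : X.γ h * X.γ l = X.gamProd (h ⊗ₜ l) :=
  (X.mulHom_tmul 1 1 h l).trans (by rw [← one_def, one_mul, gamMul_one])

lemma γ_mul_const (a : A) :
    X.γ * convConst k X.Product H (X.ι a) = convMap X.ι (X.act a) * X.γ := by
  ext h
  let r := Coalgebra.Repr.arbitrary k h
  rw [mul_convConst_apply, r.convMul_apply]
  simp only [convMap_apply, ι_mul_γ]
  refine (X.mulHom_tmul 1 a h 1).trans ?_
  simp only [← one_def, one_mul, X.gamMul_apply r, gamProd_one_right, tmul_mul_tmul, mul_one]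
  rfl

lemma γ_mul_γ_eq :
    convComap (coalgFst k H H) X.γ * convComap (coalgSnd k H H) X.γ =
      convMap X.ι X.cocycle * convComap (Bialgebra.mulCoalgHom k H) X.γ := by
  ext h l
  let r := Coalgebra.Repr.arbitrary k h
  let s := Coalgebra.Repr.arbitrary k l
  refine (convComap_coalgFst_mul_convComap_coalgSnd_apply _ _ _ _).trans ?_
  refine Eq.trans ?_ (convMul_apply_tmul r s _ _).symm
  simp only [convMap_apply, convComap_apply, γ_mul_γ, X.gamProd_apply r s]
  exact Finset.sum_congr rfl fun i _ => Finset.sum_congr rfl fun j _ => (X.ι_mul_γ _ _).symm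

lemma γ_one : X.γ 1 = 1 := rfl

variable {finv : WithConv (H ⊗[k] H →ₗ[k] A)}

lemma cleavingInv_mul_γ (hf : finv * X.cocycle = 1) : cleavingInv X.ι finv X.γ * X.γ = 1 :=
  cleavingInv_mul X.γ_one X.γ_mul_γ_eq hf

/-- The retraction `a # h ↦ ε(h)a` of `A → A #_f H`. -/
def retraction : X.Product →ₗ[k] A :=
  (TensorProduct.rid k A).toLinearMap ∘ₗ Coalgebra.counit.lTensor A

lemma retraction_ι_mul_γ (a : A) (h : H) :
    X.retraction (X.ι a * X.γ h) = Coalgebra.counit (R := k) h • a := by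
  rw [ι_mul_γ]
  exact TensorProduct.rid_tmul ..

lemma retraction_ι (a : A) : X.retraction (X.ι a) = a := by
  simpa [γ_one] using X.retraction_ι_mul_γ a 1

lemma γ_mul_cleavingInv (hf : finv * X.cocycle = 1) : X.γ * cleavingInv X.ι finv X.γ = 1 :=
  mul_eq_one_of_mem_range X.retraction_ι_mul_γ X.γ_one (X.cleavingInv_mul_γ hf)
    (mul_cleavingInv_mem_range X.γ_one X.γ_mul_const X.γ_mul_γ_eq)

/-- The crossed product as a cleft extension of `A`. -/
def cleftExtension (hf : finv * X.cocycle = 1) : CleftExtension X.ι H where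
  act := X.act
  cocycle := X.cocycle
  γ := ⟨X.γ, cleavingInv X.ι finv X.γ, X.γ_mul_cleavingInv hf, X.cleavingInv_mul_γ hf⟩
  γ_mul_const := X.γ_mul_const
  γ_mul_γ_eq := X.γ_mul_γ_eq

lemma cleavingInv_apply (h : H) :
    cleavingInv X.ι finv X.γ h = gammaInv k A H (TensorProduct.curry finv.ofConv) h := by
  let r := Coalgebra.Repr.arbitrary k h
  let r₂ i := Coalgebra.Repr.arbitrary k (r.right i)
  refine Eq.trans ?_ (gammaInv_apply r r₂ _).symm
  refine (copMul_apply r _ _).trans (Finset.sum_congr rfl fun i _ => (X.ι_mul_γ _ _).trans ?_)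
  rw [antipodeFst_apply (r₂ i)]
  rfl

lemma cleftExtension_theta_tmul (hf : finv * X.cocycle = 1) {I : Type*}
    (ρ : ∀ h : H, Coalgebra.Repr k h I) (r : ℕ) (h : H) (x : X.Product) (a : Fin r → A) :
    (X.cleftExtension hf).theta ρ r h
        (x ⊗ₜ PiTensorProduct.tprod k fun i => (Submodule.span k {(1 : A)}).mkQ (a i)) =
      sweedlerSum ρ (r + 1) h fun g =>
        (X.mulHom (X.mulHom (gam k A H (g (Fin.last _))) x)
            (gammaInv k A H (TensorProduct.curry finv.ofConv) (g 0)) : X.Product) ⊗ₜ[k]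
          PiTensorProduct.tprod k fun i =>
            (Submodule.span k {(1 : A)}).mkQ (X.actHom (g i.succ.castSucc) (a i)) := by
  simp only [← X.cleavingInv_apply]
  exact twistMap_tmul ρ _ _ _ r x a h

end CrossedSystem

end Product

end CrossedSystems

noncomputable section SweedlerConditions

open WithConv

variable {k A H : Type*} [CommRing k] [Ring A] [Algebra k A] [Ring H] [HopfAlgebra k H]
  {n : H → ℕ} {c₁ c₂ : H → ℕ → H} {σ : H →ₗ[k] A →ₗ[k] A} {f finv : H →ₗ[k] H →ₗ[k] A}

/-- The representations of `Δ(h)` provided by a Sweedler representation. -/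
@[simps]
def IsSweedlerRep.repr (hrep : IsSweedlerRep k H n c₁ c₂) (h : H) : Coalgebra.Repr k h ℕ where
  index := Finset.range (n h)
  left := c₁ h
  right := c₂ h
  eq := (hrep h).symm

lemma IsSweedlerRep.swSum_eq {M : Type*} [AddCommMonoid M] (hrep : IsSweedlerRep k H n c₁ c₂)
    (r : ℕ) (h : H) (F : (Fin (r + 1) → H) → M) :
    swSum (H := H) n c₁ c₂ r h F = sweedlerSum hrep.repr r h F := by
  induction r generalizing h with
  | zero => rfl
  | succ r ih => exact Finset.sum_congr rfl fun i _ => ih _ _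

/-- A weak action as a measuring of `A` by `H`. -/
def IsWeakAction.measuring (hweak : IsWeakAction k A H n c₁ c₂ σ)
    (hrep : IsSweedlerRep k H n c₁ c₂) : A →ₐ[k] WithConv (H →ₗ[k] A) :=
  AlgHom.ofLinearMap ((WithConv.linearEquiv k _).symm.toLinearMap ∘ₗ σ.flip)
    (by
      ext h
      simpa [Algebra.algebraMap_eq_smul_one] using hweak.2.1 h)
    fun a b => by
      ext h
      rw [(hrep.repr h).convMul_apply]
      exact hweak.1 h a b

lemma IsWeakAction.measuring_apply (hweak : IsWeakAction k A H n c₁ c₂ σ)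
    (hrep : IsSweedlerRep k H n c₁ c₂) (a : A) (h : H) :
    hweak.measuring hrep a h = σ h a := rfl

lemma IsCocycle.convMeasure_mul (hcocycle : IsCocycle k A H n c₁ c₂ σ f)
    (hweak : IsWeakAction k A H n c₁ c₂ σ) (hrep : IsSweedlerRep k H n c₁ c₂) :
    let u : WithConv (H ⊗[k] H →ₗ[k] A) := toConv (TensorProduct.lift f)
    convMeasure (hweak.measuring hrep) u * convComap (mulRight k H) u =
      convComap (dropRight k H) u * convComap (mulLeft k H) u := by
  intro u
  let r := hrep.repr
  ext h l m
  have hL := convMeasure_mul_convComap_mulRight_apply (r h) (r l) (r m) (hweak.measuring hrep) u u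
  have hR := convComap_dropRight_mul_convComap_mulLeft_apply (r h) (r l) u u m
  simp only [r, u, TensorProduct.lift.tmul, hweak.measuring_apply, hrep.repr_index,
    hrep.repr_left, hrep.repr_right] at hL hR
  exact hL.trans ((hcocycle h l m).trans hR.symm)

lemma IsTwistedModule.convMeasure_mul (htwisted : IsTwistedModule k A H n c₁ c₂ σ f)
    (hweak : IsWeakAction k A H n c₁ c₂ σ) (hrep : IsSweedlerRep k H n c₁ c₂) (a : A) :
    let u : WithConv (H ⊗[k] H →ₗ[k] A) := toConv (TensorProduct.lift f)
    let w := hweak.measuring hrep a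
    convMeasure (hweak.measuring hrep) w * u = u * convComap (Bialgebra.mulCoalgHom k H) w := by
  intro u w
  let r := hrep.repr
  ext h l
  have hL := convMul_apply_tmul (r h) (r l) (convMeasure (hweak.measuring hrep) w) u
  have hR := convMul_apply_tmul (r h) (r l) u (convComap (Bialgebra.mulCoalgHom k H) w)
  simp only [r, u, w, TensorProduct.lift.tmul, hweak.measuring_apply, hrep.repr_index,
    hrep.repr_left, hrep.repr_right, convMeasure_apply_tmul] at hL hR
  exact hL.trans ((htwisted h l a).trans hR.symm)

/-- The crossed system given by a weak action and a cocycle subject to the conditions (i)–(iii). -/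
def IsWeakAction.crossedSystem (hweak : IsWeakAction k A H n c₁ c₂ σ)
    (hrep : IsSweedlerRep k H n c₁ c₂) (hnormal : IsNormal k A H f)
    (hcocycle : IsCocycle k A H n c₁ c₂ σ f) (htwisted : IsTwistedModule k A H n c₁ c₂ σ f) :
    CrossedSystem k A H where
  act := hweak.measuring hrep
  cocycle := toConv (TensorProduct.lift f)
  act_one_right := hweak.2.2
  cocycle_one_right h := (hnormal h).1
  cocycle_one_left h := (hnormal h).2
  cocycle_mul := hcocycle.convMeasure_mul hweak hrep
  twisted := htwisted.convMeasure_mul hweak hrep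

lemma IsConvInverse.mul_eq_one (hinv : IsConvInverse k A H n c₁ c₂ f finv)
    (hrep : IsSweedlerRep k H n c₁ c₂) :
    (toConv (TensorProduct.lift finv) * toConv (TensorProduct.lift f) :
      WithConv (H ⊗[k] H →ₗ[k] A)) = 1 := by
  ext h l
  refine (convMul_apply_tmul (hrep.repr h) (hrep.repr l) _ _).trans ((hinv h l).2.trans ?_)
  simp [Algebra.algebraMap_eq_smul_one, mul_comm]

end SweedlerConditions

section Statement13

variable (k A H : Type*) [CommRing k] [Ring A] [Algebra k A] [Ring H] [HopfAlgebra k H]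

/-- For all `h, l ∈ H` the endomorphisms of the Hochschild homology
`H_*(A, E)` induced by `ϑ^h ∘ ϑ^l` and by `ϑ^{hl}` coincide in every degree (i.e. on every
cycle their values differ by a boundary); consequently `H_*(A, E)` is a left `H`-module. -/
theorem theta_action_on_homology
    (σ : H →ₗ[k] A →ₗ[k] A) (f finv : H →ₗ[k] H →ₗ[k] A)
    (n : H → ℕ) (c₁ c₂ : H → ℕ → H)
    (hrep : IsSweedlerRep k H n c₁ c₂)
    (hweak : IsWeakAction k A H n c₁ c₂ σ)
    (hnormal : IsNormal k A H f)
    (hcocycle : IsCocycle k A H n c₁ c₂ σ f)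
    (htwisted : IsTwistedModule k A H n c₁ c₂ σ f)
    (hinv : IsConvInverse k A H n c₁ c₂ f finv)
    -- the Hochschild boundary map of `A` with coefficients in `E`:
    (bd : ∀ r : ℕ, HochM k A H (r + 1) →ₗ[k] HochM k A H r)
    (hbd : ∀ (r : ℕ) (x : A ⊗[k] H) (a : Fin (r + 1) → A),
      bd r (x ⊗ₜ[k]
          (PiTensorProduct.tprod k fun i : Fin (r + 1) =>
            (Submodule.span k {(1 : A)}).mkQ (a i))) =
        (crossedMul k A H σ f x ((a 0) ⊗ₜ[k] (1 : H))) ⊗ₜ[k]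
            (PiTensorProduct.tprod k fun i : Fin r =>
              (Submodule.span k {(1 : A)}).mkQ (a i.succ))
          + (∑ j : Fin r, ((-1 : k) ^ ((j : ℕ) + 1)) •
              (x ⊗ₜ[k] (PiTensorProduct.tprod k fun m : Fin r =>
                if (m : ℕ) < (j : ℕ) then (Submodule.span k {(1 : A)}).mkQ (a m.castSucc)
                else if (m : ℕ) = (j : ℕ) then
                  (Submodule.span k {(1 : A)}).mkQ (a j.castSucc * a j.succ)
                else (Submodule.span k {(1 : A)}).mkQ (a m.succ))))
          + ((-1 : k) ^ (r + 1)) •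
              ((crossedMul k A H σ f ((a (Fin.last r)) ⊗ₜ[k] (1 : H)) x) ⊗ₜ[k]
                (PiTensorProduct.tprod k fun i : Fin r =>
                  (Submodule.span k {(1 : A)}).mkQ (a i.castSucc))))
    -- the chain endomorphisms `ϑ^h`:
    (theta : H → ∀ r : ℕ, HochM k A H r →ₗ[k] HochM k A H r)
    (htheta : ∀ (h : H) (r : ℕ) (x : A ⊗[k] H) (a : Fin r → A),
      theta h r (x ⊗ₜ[k]
          (PiTensorProduct.tprod k fun i : Fin r =>
            (Submodule.span k {(1 : A)}).mkQ (a i))) =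
        swSum (H := H) n c₁ c₂ (r + 1) h (fun v : Fin (r + 2) → H =>
          (crossedMul k A H σ f
              (crossedMul k A H σ f (gam k A H (v (Fin.last (r + 1)))) x)
              (gammaInv k A H finv (v 0))) ⊗ₜ[k]
            (PiTensorProduct.tprod k fun i : Fin r =>
              (Submodule.span k {(1 : A)}).mkQ (σ (v i.succ.castSucc) (a i))))) :
    ∀ h l : H,
      (∀ z : HochM k A H 0, ∃ w : HochM k A H 1,
        theta h 0 (theta l 0 z) - theta (h * l) 0 z = bd 0 w) ∧
      (∀ (r : ℕ) (z : HochM k A H (r + 1)), bd r z = 0 →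
        ∃ w : HochM k A H (r + 2),
          theta h (r + 1) (theta l (r + 1) z) - theta (h * l) (r + 1) z = bd (r + 1) w) := by
  let X := hweak.crossedSystem hrep hnormal hcocycle htwisted
  have hf : WithConv.toConv (TensorProduct.lift finv) * X.cocycle = 1 := hinv.mul_eq_one hrep
  let Y := X.cleftExtension hf
  have hbd' : IsHochschildBoundary X.ι bd := hbd
  have hq (a : A) : ((Submodule.span k {(1 : A)}).mkQ ∘ₗ X.retraction) (X.ι a) =
      (Submodule.span k {(1 : A)}).mkQ a := congrArg _ (X.retraction_ι a)
  have htheta' (h : H) (r : ℕ) : theta h r = Y.theta hrep.repr r h :=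
    hochschildChains_ext (E := X.Product) fun x a =>
      (htheta h r x a).trans ((hrep.swSum_eq (r + 1) h _).trans
        (X.cleftExtension_theta_tmul hf hrep.repr r h x a).symm)
  refine fun h l => ⟨fun z => ?_, fun r z hz => ?_⟩
  · simp only [htheta']
    exact Y.exists_theta_theta_sub_theta_mul_zero hrep.repr hbd' hq h l z
  · simp only [htheta']
    exact Y.exists_theta_theta_sub_theta_mul_succ hrep.repr hbd' hq h l r z hz

end Statement13
end

section
/- Assume conditions (i)–(iii) hold, so E = A #_f H is a crossed product, let Ȟ = H/[H,H] be the quotient coalgebra of H by the coideal spanned by all commutators hl − lh, and write h̄ for the class of h in Ȟ. For each n ≥ 0 define the k-linear map ρ_n : E^{⊗(n+1)} → E^{⊗(n+1)} ⊗_k Ȟ by ρ_n((a_0#h_0) ⊗ ⋯ ⊗ (a_n#h_n)) = (a_0#h_0^{(1)}) ⊗ ⋯ ⊗ (a_n#h_n^{(1)}) ⊗ (h_0^{(2)} ⋯ h_n^{(2)})‾. Then ρ commutes with the Hochschild boundary b of E, namely (b ⊗ id_Ȟ) ∘ ρ_n = ρ_{n-1} ∘ b where b(x_0 ⊗ ⋯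 ⊗ x_n) = Σ_{i=0}^{n-1} (−1)^i x_0 ⊗ ⋯ ⊗ x_i x_{i+1} ⊗ ⋯ ⊗ x_n + (−1)^n x_n x_0 ⊗ x_1 ⊗ ⋯ ⊗ x_{n-1}, and ρ commutes with the signed cyclic operator t, namely (t ⊗ id_Ȟ) ∘ ρ_n = ρ_n ∘ t where t(x_0 ⊗ ⋯ ⊗ x_n) = (−1)^n x_n ⊗ x_0 ⊗ ⋯ ⊗ x_{n-1}. (Hence ρ is a morphism of mixed complexes, commuting with b and with Connes' operator B.) -/
open TensorProduct

section Statement14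

variable (k A H : Type*) [CommRing k] [Ring A] [Algebra k A] [Ring H] [HopfAlgebra k H]

/-- The commutator submodule `[H,H]` of `H`. -/
abbrev commSub : Submodule k H := Submodule.span k {x : H | ∃ h l : H, x = h * l - l * h}

/-- The quotient coalgebra `Ȟ = H/[H,H]` (as a `k`-module). -/
abbrev Hbar : Type _ := H ⧸ commSub k H

/-- The modules `E^{⊗(n+1)}` of the cyclic complex of `E = A #_f H`. -/
abbrev CycM (m : ℕ) : Type _ := ⨂[k]^(m + 1) (A ⊗[k] H)

/-!
Write `ρ` as: apply the coaction `ν = id ⊗ Δ` to every tensor factor, multiply all the resulting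
elements of `H` in order, and apply a linear map `π : H → Q` with `π (h l) = π (l h)`. Since `Δ` is
coassociative and multiplicative, `ν` is multiplicative for the product of `A #_f H`. Hence `ρ`
commutes with contracting two neighbouring factors, and it commutes with the cyclic shift because
`π` does not see the cyclic rotation of a product. Both `b` and `t` are built from these two
operations.
-/

noncomputable section TensorPowerOperators

variable {R V W : Type*} [CommSemiring R] [AddCommMonoid V] [Module R V]
  [AddCommMonoid W] [Module R W]

theorem multilinearMap_ext_tmul {ι U : Type*} [Finite ι] [AddCommMonoid U] [Module R U]
    {F G : MultilinearMap R (fun _ : ι => V ⊗[R] W) U}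
    (h : ∀ (v : ι → V) (w : ι → W),
      F (fun i => v i ⊗ₜ[R] w i) = G (fun i => v i ⊗ₜ[R] w i)) :
    F = G := by
  classical
  cases nonempty_fintype ι
  ext z
  choose S hS using fun i => TensorProduct.exists_finset (R := R) (z i)
  have hz : z = fun i => ∑ p ∈ S i, p.1 ⊗ₜ[R] p.2 := funext hS
  rw [hz, MultilinearMap.map_sum_finset, MultilinearMap.map_sum_finset]
  exact Finset.sum_congr rfl fun _ _ => h _ _

theorem tensorPower_ext_tmul {n : ℕ} {U : Type*} [AddCommMonoid U] [Module R U]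
    {F G : ⨂[R]^n (V ⊗[R] W) →ₗ[R] U}
    (h : ∀ (v : Fin n → V) (w : Fin n → W),
      F (PiTensorProduct.tprod R fun i => v i ⊗ₜ[R] w i) =
        G (PiTensorProduct.tprod R fun i => v i ⊗ₜ[R] w i)) :
    F = G :=
  PiTensorProduct.ext (multilinearMap_ext_tmul h)

theorem contractNth_castSucc_apply {α : Type*} {n : ℕ} (op : α → α → α) (i : Fin n)
    (z : Fin (n + 1) → α) (j : Fin n) :
    Fin.contractNth i.castSucc op z j =
      if (j : ℕ) < i then z j.castSucc
      else if (j : ℕ) = i then op (z i.castSucc) (z i.succ) else z j.succ := by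
  simp only [Fin.contractNth, Fin.val_castSucc]
  split_ifs with _ hji
  · rfl
  · rw [Fin.ext hji]
  · rfl

theorem contractNth_castSucc_update {α : Type*} {n : ℕ} (op : α → α → α) (i : Fin n)
    (z : Fin (n + 1) → α) (q : Fin (n + 1)) (v : α) :
    Fin.contractNth i.castSucc op (Function.update z q v) =
      Function.update (Fin.contractNth i.castSucc op z) (i.predAbove q)
        (if q = i.castSucc then op v (z i.succ)
          else if q = i.succ then op (z i.castSucc) v else v) := by
  have hpred : (i.predAbove q : ℕ) = if (i : ℕ) < q then (q : ℕ) - 1 else q := by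
    rw [Fin.predAbove]
    simp only [Fin.lt_def, Fin.val_castSucc]
    split_ifs <;> simp
  ext j
  simp only [Function.update_apply, contractNth_castSucc_apply, Fin.ext_iff, Fin.val_castSucc,
    Fin.val_succ, hpred]
  split_ifs <;> first | rfl | (exfalso; omega)

/-- The face map `v₀ ⊗ ⋯ ⊗ vₙ ↦ v₀ ⊗ ⋯ ⊗ μ(vᵢ, vᵢ₊₁) ⊗ ⋯ ⊗ vₙ` of the Hochschild complex of a
module `V` with a bilinear product `μ`, which need not be associative or unital. -/
def hochschildFace (μ : V →ₗ[R] V →ₗ[R] V) {n : ℕ} (i : Fin n) :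
    ⨂[R]^(n + 1) V →ₗ[R] ⨂[R]^n V :=
  PiTensorProduct.lift <| MultilinearMap.mk'
    (fun z => PiTensorProduct.tprod R (Fin.contractNth i.castSucc (fun x y => μ x y) z))
    (fun z q v w => by
      simp only [contractNth_castSucc_update]
      split_ifs <;> simp only [map_add, LinearMap.add_apply, MultilinearMap.map_update_add])
    (fun z q c v => by
      simp only [contractNth_castSucc_update]
      split_ifs <;> simp only [map_smul, LinearMap.smul_apply, MultilinearMap.map_update_smul])

@[simp]
theorem hochschildFace_tprod (μ : V →ₗ[R] V →ₗ[R] V) {n : ℕ} (i : Fin n) (x : Fin (n + 1) → V) :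
    hochschildFace μ i (PiTensorProduct.tprod R x) =
      PiTensorProduct.tprod R (Fin.contractNth i.castSucc (fun y z => μ y z) x) :=
  PiTensorProduct.lift.tprod x

theorem map_comp_hochschildFace {μ : V →ₗ[R] V →ₗ[R] V} {μ' : W →ₗ[R] W →ₗ[R] W}
    {φ : V →ₗ[R] W} (hφ : ∀ x y, φ (μ x y) = μ' (φ x) (φ y)) {n : ℕ} (i : Fin n) :
    PiTensorProduct.map (fun _ => φ) ∘ₗ hochschildFace μ i =
      hochschildFace μ' i ∘ₗ PiTensorProduct.map (fun _ => φ) := by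
  ext x
  simp only [LinearMap.compMultilinearMap_apply, LinearMap.comp_apply, hochschildFace_tprod,
    PiTensorProduct.map_tprod]
  exact congrArg (PiTensorProduct.tprod R) (Fin.comp_contractNth _ _ hφ _ x)

variable (R V) in
/-- The unsigned cyclic operator `v₀ ⊗ ⋯ ⊗ vₙ ↦ vₙ ⊗ v₀ ⊗ ⋯ ⊗ vₙ₋₁`. -/
def cyclicShift (n : ℕ) : ⨂[R]^n V →ₗ[R] ⨂[R]^n V :=
  (PiTensorProduct.reindex R (fun _ => V) (finRotate n)).toLinearMap

@[simp]
theorem cyclicShift_tprod {n : ℕ} (x : Fin n → V) :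
    cyclicShift R V n (PiTensorProduct.tprod R x) =
      PiTensorProduct.tprod R (x ∘ (finRotate n).symm) :=
  PiTensorProduct.reindex_tprod (finRotate n) x

theorem map_comp_cyclicShift (φ : V →ₗ[R] W) (n : ℕ) :
    PiTensorProduct.map (fun _ => φ) ∘ₗ cyclicShift R V n =
      cyclicShift R W n ∘ₗ PiTensorProduct.map (fun _ => φ) :=
  PiTensorProduct.map_comp_reindex_eq (fun _ => φ) (finRotate n)

end TensorPowerOperators

section FinRotate

theorem finRotate_symm_zero (n : ℕ) : (finRotate (n + 1)).symm 0 = Fin.last n := by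
  rw [Equiv.symm_apply_eq, finRotate_last]

theorem finRotate_symm_succ {n : ℕ} (j : Fin n) : (finRotate (n + 1)).symm j.succ = j.castSucc := by
  rw [Equiv.symm_apply_eq, finRotate_apply, Fin.coeSucc_eq_succ]

theorem finRotate_symm_apply_eq_add_last {n : ℕ} (j : Fin (n + 1)) :
    (finRotate (n + 1)).symm j = j + Fin.last n := by
  rw [Equiv.symm_apply_eq, finRotate_apply, add_assoc, Fin.last_add_one, add_zero]

end FinRotate

section OrderedProducts

variable {G : Type*} [Monoid G]

theorem prod_ofFn_contractNth {n : ℕ} (g : Fin (n + 1) → G) (i : Fin n) :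
    (List.ofFn (Fin.contractNth i.castSucc (· * ·) g)).prod = (List.ofFn g).prod := by
  have prod_eq_partialProd {m : ℕ} (u : Fin m → G) :
      (List.ofFn u).prod = Fin.partialProd u (Fin.last m) := by
    simp [Fin.partialProd, List.take_of_length_le]
  have hi : i.castSucc.succ ≤ (Fin.last n).castSucc := Fin.succ_castSucc i ▸ Fin.le_last i.succ
  rw [prod_eq_partialProd, prod_eq_partialProd, Fin.partialProd_contractNth, Function.comp_apply,
    Fin.succAbove_of_le_castSucc _ _ hi, Fin.succ_last]

theorem map_prod_ofFn_finRotate_symm {Q : Type*} {π : G → Q}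
    (hπ : ∀ a b, π (a * b) = π (b * a)) {n : ℕ} (g : Fin n → G) :
    π (List.ofFn (g ∘ (finRotate n).symm)).prod = π (List.ofFn g).prod := by
  cases n with
  | zero => rfl
  | succ n =>
    obtain ⟨u, a, rfl⟩ : ∃ (u : Fin n → G) (a : G), g = Fin.snoc u a :=
      ⟨Fin.init g, g (Fin.last n), (Fin.snoc_init_self g).symm⟩
    have hrot : Fin.snoc u a ∘ (finRotate (n + 1)).symm = (Fin.cons a u : Fin (n + 1) → G) := by
      ext j
      cases j using Fin.cases with
      | zero => rw [Function.comp_apply, finRotate_symm_zero, Fin.snoc_last, Fin.cons_zero]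
      | succ j => rw [Function.comp_apply, finRotate_symm_succ, Fin.snoc_castSucc, Fin.cons_succ]
    rw [hrot, List.ofFn_cons, List.prod_cons, hπ, List.ofFn_succ', List.concat_eq_append,
      List.prod_append]
    simp

theorem prod_ofFn_tmul {R S T : Type*} [CommSemiring R] [Semiring S] [Algebra R S] [Semiring T]
    [Algebra R T] {n : ℕ} (s : Fin n → S) (t : Fin n → T) :
    (List.ofFn fun i => s i ⊗ₜ[R] t i).prod = (List.ofFn s).prod ⊗ₜ[R] (List.ofFn t).prod := by
  induction n with
  | zero => simp [Algebra.TensorProduct.one_def]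
  | succ n ih => simp [List.ofFn_succ, ih]

end OrderedProducts

noncomputable section TraceCoaction

variable {R V H Q : Type*} [CommSemiring R] [AddCommMonoid V] [Module R V]
  [Semiring H] [Algebra R H] [AddCommMonoid Q] [Module R Q]

variable (R V H) in
/-- The map `(v₁ ⊗ h₁) ⊗ ⋯ ⊗ (vₙ ⊗ hₙ) ↦ (v₁ ⊗ ⋯ ⊗ vₙ) ⊗ h₁ ⋯ hₙ`. It is obtained by multiplying
in the algebra `T(V) ⊗ H`, where `T(V)` is the tensor algebra, and projecting to degree `n`. -/
def tensorPowerCollect (n : ℕ) : ⨂[R]^n (V ⊗[R] H) →ₗ[R] (⨂[R]^n V) ⊗[R] H :=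
  LinearMap.rTensor H (DirectSum.component R ℕ (fun d => ⨂[R]^d V) n ∘ₗ
      TensorAlgebra.toDirectSum.toLinearMap) ∘ₗ
    PiTensorProduct.lift
      ((MultilinearMap.mkPiAlgebraFin R n (TensorAlgebra R V ⊗[R] H)).compLinearMap
        fun _ => LinearMap.rTensor H (TensorAlgebra.ι R))

@[simp]
theorem tensorPowerCollect_tprod_tmul {n : ℕ} (v : Fin n → V) (h : Fin n → H) :
    tensorPowerCollect R V H n (PiTensorProduct.tprod R fun i => v i ⊗ₜ[R] h i) =
      PiTensorProduct.tprod R v ⊗ₜ[R] (List.ofFn h).prod := by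
  simp only [tensorPowerCollect, LinearMap.comp_apply, PiTensorProduct.lift.tprod,
    MultilinearMap.compLinearMap_apply, MultilinearMap.mkPiAlgebraFin_apply,
    LinearMap.rTensor_tmul, prod_ofFn_tmul, ← TensorAlgebra.tprod_apply,
    AlgHom.toLinearMap_apply, TensorAlgebra.toDirectSum_tensorPower_tprod]
  rw [← DirectSum.lof_eq_of R, DirectSum.component.lof_self]

theorem tensorPowerCollect_comp_hochschildFace (μ : V →ₗ[R] V →ₗ[R] V) {n : ℕ} (i : Fin n) :
    tensorPowerCollect R V H n ∘ₗ hochschildFace (TensorProduct.map₂ μ (LinearMap.mul R H)) i =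
      LinearMap.rTensor H (hochschildFace μ i) ∘ₗ tensorPowerCollect R V H (n + 1) := by
  refine tensorPower_ext_tmul fun v h => ?_
  have contract_tmul :
      Fin.contractNth i.castSucc (fun y z => TensorProduct.map₂ μ (LinearMap.mul R H) y z)
          (fun j => v j ⊗ₜ[R] h j) =
        fun j => Fin.contractNth i.castSucc (fun y z => μ y z) v j ⊗ₜ[R]
          Fin.contractNth i.castSucc (· * ·) h j := by
    ext j
    simp only [Fin.contractNth]
    split_ifs <;> simp
  simp only [LinearMap.comp_apply, hochschildFace_tprod, contract_tmul,
    tensorPowerCollect_tprod_tmul, LinearMap.rTensor_tmul, prod_ofFn_contractNth]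

theorem lTensor_comp_tensorPowerCollect_comp_cyclicShift {π : H →ₗ[R] Q}
    (hπ : ∀ a b, π (a * b) = π (b * a)) (n : ℕ) :
    LinearMap.lTensor _ π ∘ₗ tensorPowerCollect R V H n ∘ₗ cyclicShift R (V ⊗[R] H) n =
      LinearMap.rTensor Q (cyclicShift R V n) ∘ₗ
        LinearMap.lTensor _ π ∘ₗ tensorPowerCollect R V H n := by
  refine tensorPower_ext_tmul fun v h => ?_
  have := tensorPowerCollect_tprod_tmul (R := R) (v ∘ (finRotate n).symm) (h ∘ (finRotate n).symm)
  simp only [Function.comp_def] at this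
  simp only [LinearMap.comp_apply, cyclicShift_tprod, Function.comp_def, this]
  simp only [tensorPowerCollect_tprod_tmul, LinearMap.lTensor_tmul, LinearMap.rTensor_tmul,
    cyclicShift_tprod]
  exact congrArg _ (map_prod_ofFn_finRotate_symm hπ h)

/-- The map `ρ : V^{⊗n} → V^{⊗n} ⊗ Q` induced by a coaction `ν : V → V ⊗ H` and a linear map
`π : H → Q`: apply `ν` to every factor, multiply the components in `H`, and apply `π`. -/
def traceCoaction (ν : V →ₗ[R] V ⊗[R] H) (π : H →ₗ[R] Q) (n : ℕ) :
    ⨂[R]^n V →ₗ[R] (⨂[R]^n V) ⊗[R] Q :=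
  LinearMap.lTensor _ π ∘ₗ tensorPowerCollect R V H n ∘ₗ PiTensorProduct.map fun _ => ν

theorem traceCoaction_tprod {ι : Type*} {ν : V →ₗ[R] V ⊗[R] H} (π : H →ₗ[R] Q) {n : ℕ}
    {x : Fin n → V} {s : Fin n → Finset ι} {v : Fin n → ι → V} {h : Fin n → ι → H}
    (hx : ∀ i, ν (x i) = ∑ p ∈ s i, v i p ⊗ₜ[R] h i p) :
    traceCoaction ν π n (PiTensorProduct.tprod R x) =
      ∑ p ∈ Fintype.piFinset s, PiTensorProduct.tprod R (fun i => v i (p i)) ⊗ₜ[R]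
        π (List.ofFn fun i => h i (p i)).prod := by
  classical
  simp only [traceCoaction, LinearMap.comp_apply, PiTensorProduct.map_tprod, hx,
    MultilinearMap.map_sum_finset, map_sum, tensorPowerCollect_tprod_tmul, LinearMap.lTensor_tmul]

theorem traceCoaction_comp_hochschildFace {μ : V →ₗ[R] V →ₗ[R] V} {ν : V →ₗ[R] V ⊗[R] H}
    (hν : ∀ x y, ν (μ x y) = TensorProduct.map₂ μ (LinearMap.mul R H) (ν x) (ν y))
    (π : H →ₗ[R] Q) {n : ℕ} (i : Fin n) :
    LinearMap.rTensor Q (hochschildFace μ i) ∘ₗ traceCoaction ν π (n + 1) =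
      traceCoaction ν π n ∘ₗ hochschildFace μ i := by
  simp only [traceCoaction, LinearMap.comp_assoc, map_comp_hochschildFace hν]
  rw [← LinearMap.comp_assoc _ (hochschildFace _ _), tensorPowerCollect_comp_hochschildFace,
    LinearMap.comp_assoc, ← LinearMap.comp_assoc _ (LinearMap.rTensor H _),
    LinearMap.lTensor_comp_rTensor, ← LinearMap.rTensor_comp_lTensor, LinearMap.comp_assoc]

theorem traceCoaction_comp_cyclicShift (ν : V →ₗ[R] V ⊗[R] H) {π : H →ₗ[R] Q}
    (hπ : ∀ a b, π (a * b) = π (b * a)) (n : ℕ) :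
    LinearMap.rTensor Q (cyclicShift R V n) ∘ₗ traceCoaction ν π n =
      traceCoaction ν π n ∘ₗ cyclicShift R V n := by
  have hcollect := lTensor_comp_tensorPowerCollect_comp_cyclicShift (V := V) hπ n
  simp only [traceCoaction, LinearMap.comp_assoc, map_comp_cyclicShift]
  simp only [← LinearMap.comp_assoc] at hcollect ⊢
  rw [hcollect]

end TraceCoaction

noncomputable section HochschildOperators

variable {R V : Type*} [CommRing R] [AddCommMonoid V] [Module R V]

/-- The Hochschild boundary `b` of a module with a bilinear product. Its last summand is written as
the zeroth face of the cyclically shifted tensor. -/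
def hochschildBoundary (μ : V →ₗ[R] V →ₗ[R] V) (n : ℕ) : ⨂[R]^(n + 2) V →ₗ[R] ⨂[R]^(n + 1) V :=
  (∑ i : Fin (n + 1), (-1 : R) ^ (i : ℕ) • hochschildFace μ i) +
    (-1 : R) ^ (n + 1) • (hochschildFace μ 0 ∘ₗ cyclicShift R V (n + 2))

variable (R V) in
/-- The signed cyclic operator `t` on `V^{⊗(n+1)}`. -/
def signedCyclicOperator (n : ℕ) : ⨂[R]^(n + 1) V →ₗ[R] ⨂[R]^(n + 1) V :=
  (-1 : R) ^ n • cyclicShift R V (n + 1)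

theorem hochschildBoundary_tprod (μ : V →ₗ[R] V →ₗ[R] V) {n : ℕ} (x : Fin (n + 2) → V) :
    hochschildBoundary μ n (PiTensorProduct.tprod R x) =
      (∑ i : Fin (n + 1), (-1 : R) ^ (i : ℕ) •
        PiTensorProduct.tprod R fun j : Fin (n + 1) =>
          if (j : ℕ) < (i : ℕ) then x j.castSucc
          else if (j : ℕ) = (i : ℕ) then μ (x i.castSucc) (x i.succ)
          else x j.succ) +
      (-1 : R) ^ (n + 1) •
        PiTensorProduct.tprod R fun j : Fin (n + 1) =>
          if j = 0 then μ (x (Fin.last (n + 1))) (x 0) else x j.castSucc := by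
  have contract_zero : Fin.contractNth (Fin.castSucc 0) (fun y z => μ y z)
      (x ∘ (finRotate (n + 2)).symm) =
        fun j : Fin (n + 1) => if j = 0 then μ (x (Fin.last (n + 1))) (x 0) else x j.castSucc := by
    ext j
    rw [contractNth_castSucc_apply]
    simp only [Function.comp_apply, finRotate_symm_succ, Fin.castSucc_zero, finRotate_symm_zero]
    simp
  simp only [hochschildBoundary, LinearMap.add_apply, LinearMap.sum_apply, LinearMap.smul_apply,
    LinearMap.comp_apply, cyclicShift_tprod, hochschildFace_tprod, contract_zero,
    funext (contractNth_castSucc_apply _ _ x)]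

theorem signedCyclicOperator_tprod {n : ℕ} (x : Fin (n + 1) → V) :
    signedCyclicOperator R V n (PiTensorProduct.tprod R x) =
      (-1 : R) ^ n • PiTensorProduct.tprod R fun j : Fin (n + 1) => x (j + Fin.last n) := by
  simp only [signedCyclicOperator, LinearMap.smul_apply, cyclicShift_tprod, Function.comp_def,
    finRotate_symm_apply_eq_add_last]

theorem rTensor_hochschildBoundary_comp_traceCoaction {H Q : Type*} [Semiring H] [Algebra R H]
    [AddCommMonoid Q] [Module R Q] {μ : V →ₗ[R] V →ₗ[R] V} {ν : V →ₗ[R] V ⊗[R] H}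
    (hν : ∀ x y, ν (μ x y) = TensorProduct.map₂ μ (LinearMap.mul R H) (ν x) (ν y))
    {π : H →ₗ[R] Q} (hπ : ∀ a b, π (a * b) = π (b * a)) (n : ℕ) :
    LinearMap.rTensor Q (hochschildBoundary μ n) ∘ₗ traceCoaction ν π (n + 2) =
      traceCoaction ν π (n + 1) ∘ₗ hochschildBoundary μ n := by
  ext1
  ext x
  have face_comm {m : ℕ} (i : Fin m) (z : ⨂[R]^(m + 1) V) :=
    LinearMap.congr_fun (traceCoaction_comp_hochschildFace hν π i) z
  have shift_comm (m : ℕ) (z : ⨂[R]^m V) :=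
    LinearMap.congr_fun (traceCoaction_comp_cyclicShift ν hπ m) z
  simp only [LinearMap.comp_apply] at face_comm shift_comm
  simp only [hochschildBoundary, ← LinearMap.coe_rTensorHom, map_add, map_sum, map_smul]
  simp only [LinearMap.coe_rTensorHom, LinearMap.rTensor_comp, LinearMap.compMultilinearMap_apply,
    LinearMap.comp_apply, LinearMap.add_apply, LinearMap.sum_apply, LinearMap.smul_apply, map_add,
    map_sum, map_smul, face_comm, shift_comm]

theorem rTensor_signedCyclicOperator_comp_traceCoaction {H Q : Type*} [Semiring H] [Algebra R H]
    [AddCommMonoid Q] [Module R Q] (ν : V →ₗ[R] V ⊗[R] H) {π : H →ₗ[R] Q}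
    (hπ : ∀ a b, π (a * b) = π (b * a)) (n : ℕ) :
    LinearMap.rTensor Q (signedCyclicOperator R V n) ∘ₗ traceCoaction ν π (n + 1) =
      traceCoaction ν π (n + 1) ∘ₗ signedCyclicOperator R V n := by
  rw [signedCyclicOperator, LinearMap.rTensor_smul, LinearMap.smul_comp, LinearMap.comp_smul,
    traceCoaction_comp_cyclicShift ν hπ]

end HochschildOperators

noncomputable section CrossedProductCoaction

theorem map₂_rTensor_rTensor {R M M' N N' P Q₁ Q₂ Q : Type*} [CommSemiring R]
    [AddCommMonoid M] [Module R M] [AddCommMonoid M'] [Module R M'] [AddCommMonoid N] [Module R N]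
    [AddCommMonoid N'] [Module R N'] [AddCommMonoid P] [Module R P] [AddCommMonoid Q₁]
    [Module R Q₁] [AddCommMonoid Q₂] [Module R Q₂] [AddCommMonoid Q] [Module R Q]
    (φ : M' →ₗ[R] N' →ₗ[R] P) (ψ : Q₁ →ₗ[R] Q₂ →ₗ[R] Q) (u : M →ₗ[R] M') (v : N →ₗ[R] N')
    (x : M ⊗[R] Q₁) (y : N ⊗[R] Q₂) :
    TensorProduct.map₂ φ ψ (LinearMap.rTensor Q₁ u x) (LinearMap.rTensor Q₂ v y) =
      TensorProduct.map₂ (φ.compl₁₂ u v) ψ x y := by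
  have : (TensorProduct.map₂ φ ψ).compl₁₂ (LinearMap.rTensor Q₁ u) (LinearMap.rTensor Q₂ v) =
      TensorProduct.map₂ (φ.compl₁₂ u v) ψ := by
    ext m q n r
    simp
  exact LinearMap.congr_fun₂ this x y

section Cofree

variable {R C M N : Type*} [CommSemiring R] [AddCommMonoid C] [Module R C] [Coalgebra R C]
  [AddCommMonoid M] [Module R M] [AddCommMonoid N] [Module R N]

variable (R C M) in
/-- The coaction `m ⊗ c ↦ m ⊗ c⁽¹⁾ ⊗ c⁽²⁾` of the cofree right comodule `M ⊗ C`. For `M = A` and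
`C = H` it is the coaction `nuE` of the crossed product. -/
def cofreeCoaction : M ⊗[R] C →ₗ[R] (M ⊗[R] C) ⊗[R] C :=
  (TensorProduct.assoc R M C C).symm.toLinearMap ∘ₗ LinearMap.lTensor M Coalgebra.comul

theorem cofreeCoaction_tmul (m : M) (c : C) :
    cofreeCoaction R C M (m ⊗ₜ c) =
      LinearMap.rTensor C (TensorProduct.mk R M C m) (Coalgebra.comul c) := by
  simp only [cofreeCoaction, LinearMap.comp_apply, LinearMap.lTensor_tmul, LinearEquiv.coe_coe]
  exact LinearMap.congr_fun (TensorProduct.ext' fun c d => rfl :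
    (TensorProduct.assoc R M C C).symm.toLinearMap ∘ₗ TensorProduct.mk R M _ m = _) _

theorem cofreeCoaction_rTensor (φ : M →ₗ[R] N) (z : M ⊗[R] C) :
    cofreeCoaction R C N (LinearMap.rTensor C φ z) =
      LinearMap.rTensor C (LinearMap.rTensor C φ) (cofreeCoaction R C M z) := by
  induction z with
  | zero => simp
  | add z w hz hw => simp only [map_add, hz, hw]
  | tmul m c =>
    rw [LinearMap.rTensor_tmul, cofreeCoaction_tmul, cofreeCoaction_tmul,
      ← LinearMap.rTensor_comp_apply]
    rfl

theorem cofreeCoaction_comul (c : C) :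
    cofreeCoaction R C C (Coalgebra.comul c) =
      LinearMap.rTensor C Coalgebra.comul (Coalgebra.comul c) :=
  Coalgebra.coassoc_symm_apply c

end Cofree

theorem cofreeCoaction_map₂_mul {R H M N P : Type*} [CommSemiring R] [Semiring H] [Bialgebra R H]
    [AddCommMonoid M] [Module R M] [AddCommMonoid N] [Module R N] [AddCommMonoid P] [Module R P]
    (φ : M →ₗ[R] N →ₗ[R] P) (x : M ⊗[R] H) (y : N ⊗[R] H) :
    cofreeCoaction R H P (TensorProduct.map₂ φ (LinearMap.mul R H) x y) =
      TensorProduct.map₂ (TensorProduct.map₂ φ (LinearMap.mul R H)) (LinearMap.mul R H)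
        (cofreeCoaction R H M x) (cofreeCoaction R H N y) := by
  induction x with
  | zero => simp
  | add x x' hx hx' => simp only [map_add, LinearMap.add_apply, hx, hx']
  | tmul m h =>
    induction y with
    | zero => simp
    | add y y' hy hy' => simp only [map_add, hy, hy']
    | tmul n l =>
      simp only [TensorProduct.map₂_apply_tmul, TensorProduct.map_tmul, LinearMap.mul_apply',
        cofreeCoaction_tmul, Bialgebra.comul_mul]
      generalize Coalgebra.comul (R := R) h = X
      generalize Coalgebra.comul (R := R) l = Y
      induction X with
      | zero => simp
      | add X X' hX hX' => simp only [add_mul, map_add, LinearMap.add_apply, hX, hX']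
      | tmul h₁ h₂ =>
        induction Y with
        | zero => simp
        | add Y Y' hY hY' => simp only [mul_add, map_add, hY, hY']
        | tmul l₁ l₂ => simp

variable {k A H}

/-- The map `(p ⊗ q, l) ↦ a b^p f(q, l)`, the `A`-part of the product of the crossed product:
`(a # h)(b # l) = crossedTwist σ f a b (h⁽¹⁾ ⊗ h⁽²⁾) l⁽¹⁾ # h⁽³⁾ l⁽²⁾`. -/
def crossedTwist (σ : H →ₗ[k] A →ₗ[k] A) (f : H →ₗ[k] H →ₗ[k] A) (a b : A) :
    H ⊗[k] H →ₗ[k] H →ₗ[k] A :=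
  TensorProduct.lift <| (LinearMap.llcomp k H A A).compl₁₂
    (LinearMap.mul k A ∘ₗ LinearMap.mulLeft k a ∘ₗ σ.flip b) f

@[simp]
theorem crossedTwist_tmul (σ : H →ₗ[k] A →ₗ[k] A) (f : H →ₗ[k] H →ₗ[k] A) (a b : A) (p q l : H) :
    crossedTwist σ f a b (p ⊗ₜ q) l = a * σ p b * f q l :=
  rfl

theorem crossedMul_tmul_tmul (σ : H →ₗ[k] A →ₗ[k] A) (f : H →ₗ[k] H →ₗ[k] A) (a b : A) (h l : H) :
    crossedMul k A H σ f (a ⊗ₜ[k] h) (b ⊗ₜ[k] l) =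
      TensorProduct.map₂ (crossedTwist σ f a b) (LinearMap.mul k H)
        (LinearMap.rTensor H Coalgebra.comul (Coalgebra.comul (R := k) h))
        (Coalgebra.comul (R := k) l) := by
  simp only [crossedMul, TensorProduct.lift.tmul, LinearMap.compl₂_apply, LinearMap.comp_apply,
    LinearMap.llcomp_apply, TensorProduct.curry_apply, LinearEquiv.coe_coe, TensorProduct.map_tmul,
    LinearMap.lTensor_tmul]
  generalize LinearMap.rTensor H Coalgebra.comul (Coalgebra.comul (R := k) h) = X
  generalize Coalgebra.comul (R := k) l = Y
  induction X with
  | zero =>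
    simp only [TensorProduct.zero_tmul, TensorProduct.tmul_zero, LinearEquiv.map_zero,
      LinearMap.map_zero, LinearMap.zero_apply]
  | add X X' hX hX' =>
    simp only [TensorProduct.add_tmul, TensorProduct.tmul_add, map_add, hX, hX',
      LinearMap.add_apply]
  | tmul P h =>
    induction P with
    | zero =>
      simp only [TensorProduct.zero_tmul, TensorProduct.tmul_zero, LinearEquiv.map_zero,
        LinearMap.map_zero, LinearMap.zero_apply]
    | add X X' hX hX' =>
      simp only [TensorProduct.add_tmul, TensorProduct.tmul_add, map_add, hX, hX',
        LinearMap.add_apply]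
    | tmul p q =>
      induction Y with
      | zero => simp
      | add Y Y' hY hY' => simp only [TensorProduct.tmul_add, map_add, hY, hY']
      | tmul l₁ l₂ => simp [mul_assoc]

theorem nuE_eq_cofreeCoaction : nuE k A H = cofreeCoaction k H A :=
  rfl

theorem nuE_crossedMul (σ : H →ₗ[k] A →ₗ[k] A) (f : H →ₗ[k] H →ₗ[k] A) (x y : A ⊗[k] H) :
    nuE k A H (crossedMul k A H σ f x y) =
      TensorProduct.map₂ (crossedMul k A H σ f) (LinearMap.mul k H) (nuE k A H x)
        (nuE k A H y) := by
  rw [nuE_eq_cofreeCoaction]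
  induction x with
  | zero => simp
  | add x x' hx hx' => simp only [map_add, LinearMap.add_apply, hx, hx']
  | tmul a h =>
    induction y with
    | zero => simp
    | add y y' hy hy' => simp only [map_add, hy, hy']
    | tmul b l =>
      rw [crossedMul_tmul_tmul, cofreeCoaction_map₂_mul, cofreeCoaction_rTensor,
        cofreeCoaction_comul, cofreeCoaction_comul, cofreeCoaction_tmul, cofreeCoaction_tmul,
        ← LinearMap.rTensor_comp_apply, map₂_rTensor_rTensor, map₂_rTensor_rTensor]
      congr 3
      ext h₁ l₁
      exact (crossedMul_tmul_tmul σ f a b h₁ l₁).symm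

theorem traceCoaction_nuE_tprod {Q : Type*} [AddCommMonoid Q] [Module k Q] (π : H →ₗ[k] Q)
    {r : H → ℕ} {c₁ c₂ : H → ℕ → H} (hrep : IsSweedlerRep k H r c₁ c₂) {n : ℕ} (a : Fin n → A)
    (h : Fin n → H) :
    traceCoaction (nuE k A H) π n (PiTensorProduct.tprod k fun i => a i ⊗ₜ[k] h i) =
      ∑ p ∈ Fintype.piFinset fun i => Finset.range (r (h i)),
        (PiTensorProduct.tprod k fun i => a i ⊗ₜ[k] c₁ (h i) (p i)) ⊗ₜ[k]
          π (List.ofFn fun i => c₂ (h i) (p i)).prod := by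
  have nuE_tmul (i : Fin n) : nuE k A H (a i ⊗ₜ[k] h i) =
      ∑ p ∈ Finset.range (r (h i)), (a i ⊗ₜ[k] c₁ (h i) p) ⊗ₜ[k] c₂ (h i) p := by
    rw [nuE_eq_cofreeCoaction, cofreeCoaction_tmul, hrep (h i)]
    simp only [map_sum, LinearMap.rTensor_tmul, TensorProduct.mk_apply]
  rw [traceCoaction_tprod π nuE_tmul]

theorem rho_commutes_with_b_and_t_general {Q : Type*} [AddCommMonoid Q] [Module k Q]
    (σ : H →ₗ[k] A →ₗ[k] A) (f : H →ₗ[k] H →ₗ[k] A) {r : H → ℕ} {c₁ c₂ : H → ℕ → H}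
    (hrep : IsSweedlerRep k H r c₁ c₂) {π : H →ₗ[k] Q} (hπ : ∀ a b, π (a * b) = π (b * a))
    {ρ : ∀ m : ℕ, CycM k A H m →ₗ[k] CycM k A H m ⊗[k] Q}
    (hρ : ∀ (m : ℕ) (a : Fin (m + 1) → A) (h : Fin (m + 1) → H),
      ρ m (PiTensorProduct.tprod k fun i => a i ⊗ₜ[k] h i) =
        ∑ p ∈ Fintype.piFinset fun i => Finset.range (r (h i)),
          (PiTensorProduct.tprod k fun i => a i ⊗ₜ[k] c₁ (h i) (p i)) ⊗ₜ[k]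
            π (List.ofFn fun i => c₂ (h i) (p i)).prod)
    {bd : ∀ m : ℕ, CycM k A H (m + 1) →ₗ[k] CycM k A H m}
    (hbd : ∀ (m : ℕ) (x : Fin (m + 2) → A ⊗[k] H),
      bd m (PiTensorProduct.tprod k x) =
        (∑ i : Fin (m + 1), (-1 : k) ^ (i : ℕ) •
          PiTensorProduct.tprod k fun j : Fin (m + 1) =>
            if (j : ℕ) < (i : ℕ) then x j.castSucc
            else if (j : ℕ) = (i : ℕ) then crossedMul k A H σ f (x i.castSucc) (x i.succ)
            else x j.succ) +
        (-1 : k) ^ (m + 1) •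
          PiTensorProduct.tprod k fun j : Fin (m + 1) =>
            if j = 0 then crossedMul k A H σ f (x (Fin.last (m + 1))) (x 0) else x j.castSucc)
    {t : ∀ m : ℕ, CycM k A H m →ₗ[k] CycM k A H m}
    (ht : ∀ (m : ℕ) (x : Fin (m + 1) → A ⊗[k] H),
      t m (PiTensorProduct.tprod k x) =
        (-1 : k) ^ m • PiTensorProduct.tprod k fun j : Fin (m + 1) => x (j + Fin.last m)) :
    (∀ m, LinearMap.rTensor Q (bd m) ∘ₗ ρ (m + 1) = ρ m ∘ₗ bd m) ∧
      (∀ m, LinearMap.rTensor Q (t m) ∘ₗ ρ m = ρ m ∘ₗ t m) := by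
  have rho_eq (m : ℕ) : ρ m = traceCoaction (nuE k A H) π (m + 1) :=
    tensorPower_ext_tmul fun a h => by rw [hρ, traceCoaction_nuE_tprod π hrep]
  have bd_eq (m : ℕ) : bd m = hochschildBoundary (crossedMul k A H σ f) m :=
    PiTensorProduct.ext <| MultilinearMap.ext fun x =>
      (hbd m x).trans (hochschildBoundary_tprod _ x).symm
  have t_eq (m : ℕ) : t m = signedCyclicOperator k (A ⊗[k] H) m :=
    PiTensorProduct.ext <| MultilinearMap.ext fun x =>
      (ht m x).trans (signedCyclicOperator_tprod x).symm
  refine ⟨fun m => ?_, fun m => ?_⟩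
  · rw [rho_eq, rho_eq, bd_eq]
    exact rTensor_hochschildBoundary_comp_traceCoaction (nuE_crossedMul σ f) hπ m
  · rw [rho_eq, t_eq]
    exact rTensor_signedCyclicOperator_comp_traceCoaction (nuE k A H) hπ m

theorem commSub_mkQ_mul_comm (a b : H) : (commSub k H).mkQ (a * b) = (commSub k H).mkQ (b * a) :=
  (Submodule.Quotient.eq _).2 (Submodule.subset_span ⟨a, b, rfl⟩)

end CrossedProductCoaction

/-- The maps
`ρ_n((a₀#h₀) ⊗ ⋯ ⊗ (a_n#h_n)) = (a₀#h₀⁽¹⁾) ⊗ ⋯ ⊗ (a_n#h_n⁽¹⁾) ⊗ (h₀⁽²⁾⋯h_n⁽²⁾)‾`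
commute with the Hochschild boundary `b` and with the signed cyclic operator `t` of the
crossed product `E = A #_f H` (hence `ρ` is a morphism of mixed complexes). -/
theorem rho_commutes_with_b_and_t
    (σ : H →ₗ[k] A →ₗ[k] A) (f : H →ₗ[k] H →ₗ[k] A)
    (n : H → ℕ) (c₁ c₂ : H → ℕ → H)
    (hrep : IsSweedlerRep k H n c₁ c₂)
    (hweak : IsWeakAction k A H n c₁ c₂ σ)
    (hnormal : IsNormal k A H f)
    (hcocycle : IsCocycle k A H n c₁ c₂ σ f)
    (htwisted : IsTwistedModule k A H n c₁ c₂ σ f)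
    -- the maps `ρ_m : E^{⊗(m+1)} → E^{⊗(m+1)} ⊗ Ȟ`:
    (ρ : ∀ m : ℕ, CycM k A H m →ₗ[k] (CycM k A H m ⊗[k] Hbar k H))
    (hρ : ∀ (m : ℕ) (a : Fin (m + 1) → A) (hh : Fin (m + 1) → H),
      ρ m (PiTensorProduct.tprod k fun i : Fin (m + 1) => (a i) ⊗ₜ[k] (hh i)) =
        ∑ p ∈ Fintype.piFinset (fun i : Fin (m + 1) => Finset.range (n (hh i))),
          (PiTensorProduct.tprod k fun i : Fin (m + 1) => (a i) ⊗ₜ[k] c₁ (hh i) (p i)) ⊗ₜ[k]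
            (commSub k H).mkQ ((List.ofFn fun i : Fin (m + 1) => c₂ (hh i) (p i)).prod))
    -- the Hochschild boundary `b` of `E`:
    (bd : ∀ m : ℕ, CycM k A H (m + 1) →ₗ[k] CycM k A H m)
    (hbd : ∀ (m : ℕ) (x : Fin (m + 2) → A ⊗[k] H),
      bd m (PiTensorProduct.tprod k x) =
        (∑ i : Fin (m + 1), ((-1 : k) ^ (i : ℕ)) •
            (PiTensorProduct.tprod k fun j : Fin (m + 1) =>
              if (j : ℕ) < (i : ℕ) then x j.castSucc
              else if (j : ℕ) = (i : ℕ) then crossedMul k A H σ f (x i.castSucc) (x i.succ)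
              else x j.succ))
          + ((-1 : k) ^ (m + 1)) •
              (PiTensorProduct.tprod k fun j : Fin (m + 1) =>
                if j = 0 then crossedMul k A H σ f (x (Fin.last (m + 1))) (x 0)
                else x j.castSucc))
    -- the signed cyclic operator `t` of `E`:
    (t : ∀ m : ℕ, CycM k A H m →ₗ[k] CycM k A H m)
    (ht : ∀ (m : ℕ) (x : Fin (m + 1) → A ⊗[k] H),
      t m (PiTensorProduct.tprod k x) =
        ((-1 : k) ^ m) •
          (PiTensorProduct.tprod k fun j : Fin (m + 1) => x (j + Fin.last m))) :
    (∀ m : ℕ, (LinearMap.rTensor (Hbar k H) (bd m)) ∘ₗ (ρ (m + 1)) = (ρ m) ∘ₗ (bd m)) ∧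
    (∀ m : ℕ, (LinearMap.rTensor (Hbar k H) (t m)) ∘ₗ (ρ m) = (ρ m) ∘ₗ (t m)) := by
  exact rho_commutes_with_b_and_t_general σ f hrep commSub_mkQ_mul_comm hρ hbd ht

end Statement14
end
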